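/- arXiv:1709.09869 — 3 statements merged into one kernel-verified Lean document; each statement's English description precedes it below -/
import Mathlib

section
/- The Mandelbrot set is compact, connected, and full (its complement in the plane is connected). -/
/-- The quadratic map `z ↦ z² + c`. -/
noncomputable def quadMap (c z : ℂ) : ℂ := z ^ 2 + c

/-- The Mandelbrot set: parameters `c` for which the orbit of `0` under `z ↦ z² + c`
is bounded. -/
def mandelbrot : Set ℂ :=
  {c : ℂ | ∃ B : ℝ, ∀ n : ℕ, ‖(quadMap c)^[n] 0‖ ≤ B}

/-!
The Mandelbrot set is the decreasing intersection of the compact sets `‖pₙ₊₁‖ ≤ 3`, where `pₙ` is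
the `n`-th critical orbit polynomial, so it suffices that these are connected. Following Douady and
Hubbard, the point `c` of its own dynamical plane has a Böttcher coordinate as soon as `c` escapes,
and at level `n` this is a continuous `2 ^ n`-th root `Φ` of `pₙ₊₁` on `2 < ‖pₙ₊₁‖`. If
`‖pₙ₊₁‖ < t` were the union of two disjoint nonempty open sets, then `Φ` would map each of them
onto the whole annulus `2 < ‖w‖ ^ 2 ^ n < t`, being open and proper over it, so that `pₙ₊₁` would
take the value `w ^ 2 ^ n` at least `2 * 2 ^ n` times, twice its degree. The coordinate is obtained
by adjoining one square root at a time, which lifts through the exponential because the discs that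
parametrize neighbourhoods of infinity are star-shaped. Connectedness of the complement is the
maximum principle.
-/

open Bornology Filter Metric Polynomial Set Topology
open scoped NNReal

section Topology

theorem isPreconnected_iInter_of_directed {X ι : Type*} [TopologicalSpace X] [T2Space X]
    [Nonempty ι] {K : ι → Set X} (hdir : Directed (· ⊇ ·) K) (hK : ∀ i, IsCompact (K i))
    (hpre : ∀ i, IsPreconnected (K i)) : IsPreconnected (⋂ i, K i) := by
  have hclosed : IsClosed (⋂ i, K i) := isClosed_iInter fun i => (hK i).isClosed
  have hcompact : IsCompact (⋂ i, K i) :=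
    (hK (Classical.arbitrary ι)).of_isClosed_subset hclosed (iInter_subset _ _)
  rw [isPreconnected_iff_subset_of_fully_disjoint_closed hclosed]
  intro A B hA hB hcover hAB
  obtain ⟨U, V, hU, hV, hAU, hBV, hUV⟩ := SeparatedNhds.of_isCompact_isCompact
    (hcompact.inter_right hA) (hcompact.inter_right hB)
    (hAB.mono inter_subset_right inter_subset_right)
  have hsub : ⋂ i, K i ⊆ U ∪ V := fun x hx =>
    (hcover hx).imp (fun h => hAU ⟨hx, h⟩) (fun h => hBV ⟨hx, h⟩)
  obtain ⟨i, hi⟩ := exists_subset_nhds_of_isCompact hdir hK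
    fun x hx => (hU.union hV).mem_nhds (hsub hx)
  refine ((hpre i).subset_or_subset hU hV hUV hi).imp (fun h x hx => ?_) (fun h x hx => ?_)
  · exact (hcover hx).resolve_right fun hxB =>
      disjoint_left.1 hUV (h (mem_iInter.1 hx i)) (hBV ⟨hx, hxB⟩)
  · exact (hcover hx).resolve_left fun hxA =>
      disjoint_left.1 hUV (hAU ⟨hx, hxA⟩) (h (mem_iInter.1 hx i))

theorem nhds_le_map_nhds_of_comp {X Y Z : Type*} [TopologicalSpace X] [TopologicalSpace Y]
    [TopologicalSpace Z] {f : X → Y} {g : Y → Z} {x : X} {V : Set Y} (hf : ContinuousAt f x)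
    (hg : ContinuousAt g (f x)) (hV : V ∈ 𝓝 (f x)) (hinj : InjOn g V)
    (hgf : 𝓝 (g (f x)) ≤ map (g ∘ f) (𝓝 x)) : 𝓝 (f x) ≤ map f (𝓝 x) := by
  intro s hs
  have himage : (g ∘ f) '' (f ⁻¹' s ∩ f ⁻¹' V) ∈ 𝓝 (g (f x)) :=
    hgf (image_mem_map (inter_mem hs (hf hV)))
  filter_upwards [hV, hg himage] with y hyV ⟨x', ⟨hs', hV'⟩, heq⟩
  rwa [← hinj hV' hyV heq]

theorem isPreconnected_setOf_norm_mem {E : Type*} [NormedAddCommGroup E] [NormedSpace ℝ E]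
    (hE : 1 < Module.rank ℝ E) {J : Set ℝ} (hJ : J.OrdConnected) :
    IsPreconnected {x : E | ‖x‖ ∈ J} := by
  have hpolar : IsPreconnected ((J ∩ Ici 0) ×ˢ sphere (0 : E) 1) :=
    (hJ.inter ordConnected_Ici).isPreconnected.prod (isPreconnected_sphere hE 0 1)
  convert! hpolar.image (fun p : ℝ × E => p.1 • p.2) (by fun_prop) using 1
  have : Nontrivial E := rank_pos_iff_nontrivial.1 (zero_lt_one.trans hE)
  ext x
  constructor
  · intro hx
    obtain ⟨e, he⟩ : ∃ e ∈ sphere (0 : E) 1, ‖x‖ • e = x := by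
      rcases eq_or_ne x 0 with rfl | hx0
      · exact (NormedSpace.sphere_nonempty.2 zero_le_one).imp fun e he => ⟨he, by simp⟩
      · exact ⟨‖x‖⁻¹ • x, by simp [norm_smul, hx0], by simp [smul_smul, hx0]⟩
    exact ⟨(‖x‖, e), ⟨⟨hx, norm_nonneg x⟩, he.1⟩, he.2⟩
  · rintro ⟨⟨r, e⟩, ⟨⟨hr, hr0⟩, he⟩, rfl⟩
    have hr0 : 0 ≤ r := hr0
    simpa [norm_smul, abs_of_nonneg hr0, mem_sphere_zero_iff_norm.1 he] using hr

theorem frontier_inter_subset_compl {X : Type*} [TopologicalSpace X] {O U V : Set X}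
    (hO : IsOpen O) (hU : IsOpen U) (hV : IsOpen V) (hcover : O ⊆ U ∪ V)
    (hdisj : O ∩ (U ∩ V) = ∅) : frontier (O ∩ V) ⊆ Oᶜ := by
  intro y hy hyO
  rcases hcover hyO with hyU | hyV
  · obtain ⟨z, ⟨hzO, hzU⟩, -, hzV⟩ := mem_closure_iff.1 hy.1 _ (hO.inter hU) ⟨hyO, hyU⟩
    exact hdisj.subset ⟨hzO, hzU, hzV⟩
  · exact hy.2 ((hO.inter hV).interior_eq.ge ⟨hyO, hyV⟩)

theorem one_lt_rank_real_of_complex (E : Type*) [AddCommGroup E] [Module ℂ E] [Nontrivial E] :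
    1 < Module.rank ℝ E := by
  rw [rank_real_of_complex]
  calc (1 : Cardinal) < 2 * 1 := by simp
    _ ≤ 2 * Module.rank ℂ E := by gcongr; exact Cardinal.one_le_iff_pos.2 rank_pos

theorem isConnected_compl_setOf_forall_norm_le {ι E F : Type*} [NormedAddCommGroup E]
    [NormedSpace ℂ E] [Nontrivial E] [NormedAddCommGroup F] [NormedSpace ℂ F] {f : ι → E → F}
    {r : ι → ℝ} (hf : ∀ i, Differentiable ℂ (f i)) (hK : IsBounded {z | ∀ i, ‖f i z‖ ≤ r i}) :
    IsConnected {z | ∀ i, ‖f i z‖ ≤ r i}ᶜ := by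
  set K : Set E := {z | ∀ i, ‖f i z‖ ≤ r i}
  have hopen : IsOpen Kᶜ := by
    rw [isOpen_compl_iff]
    simp only [K, ofPred_forall]
    exact isClosed_iInter fun i => isClosed_le (hf i).continuous.norm continuous_const
  obtain ⟨ρ, hρ⟩ := hK.subset_closedBall 0
  have hexterior : {z : E | ‖z‖ ∈ Ioi ρ} ⊆ Kᶜ := fun z hz hzK =>
    (mem_closedBall_zero_iff.1 (hρ hzK)).not_gt hz
  obtain ⟨z₀, hz₀⟩ := NormedSpace.exists_lt_norm ℂ E ρ
  -- A piece of `Kᶜ` off a neighbourhood of infinity is bounded with frontier in `K`, so the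
  -- maximum principle places it inside `K`.
  have hpiece : ∀ U V : Set E, IsOpen U → IsOpen V → Kᶜ ⊆ U ∪ V → Kᶜ ∩ (U ∩ V) = ∅ →
      {z : E | ‖z‖ ∈ Ioi ρ} ⊆ U → Kᶜ ⊆ U := by
    intro U V hU hV hcover hdisj hUext
    have hbounded : IsBounded (Kᶜ ∩ V) := isBounded_closedBall.subset fun z hz =>
      mem_closedBall_zero_iff.2 <| not_lt.1 fun h =>
        (hdisj.subset ⟨hz.1, hUext h, hz.2⟩ : z ∈ (∅ : Set E))
    have hfrontier : frontier (Kᶜ ∩ V) ⊆ K :=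
      (frontier_inter_subset_compl hopen hU hV hcover hdisj).trans (compl_compl K).subset
    exact fun z hz => (hcover hz).resolve_right fun hzV => hz fun i =>
      Complex.norm_le_of_forall_mem_frontier_norm_le hbounded (hf i).diffContOnCl
        (fun y hy => hfrontier hy i) (subset_closure ⟨hz, hzV⟩)
  refine ⟨⟨z₀, hexterior hz₀⟩, isPreconnected_iff_subset_of_disjoint.2 ?_⟩
  intro U V hU hV hcover hdisj
  refine (isPreconnected_iff_subset_of_disjoint.1 (isPreconnected_setOf_norm_mem
    (one_lt_rank_real_of_complex E) ordConnected_Ioi) U V hU hV (hexterior.trans hcover)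
    (subset_eq_empty (inter_subset_inter_left _ hexterior) hdisj)).imp
    (hpiece U V hU hV hcover hdisj) (hpiece V U hV hU ?_ ?_)
  · rwa [union_comm]
  · rwa [inter_comm V U]

end Topology

section LogLifting

theorem exists_continuousOn_log_of_starConvex {X E : Type*} [TopologicalSpace X]
    [AddCommGroup E] [Module ℝ E] [TopologicalSpace E] [ContinuousSMul ℝ E] {D : Set (X × E)}
    (hD : ∀ x, StarConvex ℝ 0 (Prod.mk x ⁻¹' D)) {h : X × E → ℂ} (hc : ContinuousOn h D)
    (h0 : ∀ p ∈ D, h p ≠ 0) (h1 : ∀ p ∈ D, h (p.1, 0) = 1) :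
    ∃ l : X × E → ℂ, ContinuousOn l D ∧ (∀ p ∈ D, Complex.exp (l p) = h p) ∧
      ∀ p ∈ D, l (p.1, 0) = 0 := by
  classical
  have hscale : ∀ (t : unitInterval) (p : D), (p.1.1, (t : ℝ) • p.1.2) ∈ D := fun t p =>
    starConvex_zero_iff.1 (hD p.1.1) p.2 t.2.1 t.2.2
  have hbase : ∀ p ∈ D, (p.1, (0 : E)) ∈ D := fun p hp => by simpa using hscale 0 ⟨p, hp⟩
  have hcont : Continuous fun q : unitInterval × D => h (q.2.1.1, (q.1 : ℝ) • q.2.1.2) :=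
    hc.comp_continuous (by fun_prop) fun q => hscale q.1 q.2
  let H : C(unitInterval × D, {z : ℂ // z ≠ 0}) :=
    ⟨fun q => ⟨_, h0 _ (hscale q.1 q.2)⟩, hcont.subtype_mk _⟩
  let G : C(unitInterval × D, ℂ) := Complex.isCoveringMap_exp.liftHomotopy H (.const D 0)
    fun p => Subtype.ext (by simp [H, h1 _ p.2])
  have hG : ∀ p : D, Complex.exp (G (1, p)) = h p := fun p => by
    simpa [H] using
      congrArg Subtype.val (congrFun (Complex.isCoveringMap_exp.liftHomotopy_lifts H _ _) (1, p))
  let L : D → ℂ := fun p => G (1, p) - G (1, ⟨(p.1.1, 0), hbase _ p.2⟩)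
  have hL : Continuous L := by fun_prop
  refine ⟨fun p => if hp : p ∈ D then L ⟨p, hp⟩ else 0, ?_, fun p hp => ?_, fun p hp => ?_⟩
  · rw [continuousOn_iff_continuous_domRestrict]
    convert hL using 1
    ext p
    simp
  · simp [hp, L, Complex.exp_sub, hG, h1 p hp]
  · simp [hbase p hp, L]

end LogLifting

section Lemniscate

theorem exists_mem_nhds_injOn_pow {𝕜 : Type*} [NontriviallyNormedField 𝕜] [CompleteSpace 𝕜]
    [CharZero 𝕜] {d : ℕ} (hd : d ≠ 0) {w : 𝕜} (hw : w ≠ 0) :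
    ∃ V ∈ 𝓝 w, InjOn (fun x : 𝕜 => x ^ d) V :=
  have hderiv : (d : 𝕜) * w ^ (d - 1) ≠ 0 :=
    mul_ne_zero (Nat.cast_ne_zero.2 hd) (pow_ne_zero _ hw)
  ⟨_, (hasStrictDerivAt_pow d w).eventually_left_inverse hderiv, LeftInvOn.injOn fun _ hx => hx⟩

theorem encard_setOf_pow_eq {d : ℕ} (hd : d ≠ 0) {z : ℂ} (hz : z ≠ 0) :
    {w : ℂ | w ^ d = z}.encard = d := by
  have hζ := Complex.isPrimitiveRoot_exp d hd
  have hset : {w : ℂ | w ^ d = z} = (nthRoots d z).toFinset := by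
    ext w
    simp [mem_nthRoots hd.bot_lt]
  rw [hset, encard_coe_eq_coe_finsetCard, Multiset.toFinset_card_of_nodup (hζ.nthRoots_nodup hz),
    hζ.card_nthRoots, if_pos (IsAlgClosed.exists_pow_nat_eq z hd.bot_lt)]

theorem encard_setOf_eval_eq_le {R : Type*} [CommRing R] [IsDomain R] {P : R[X]}
    (hP : P.natDegree ≠ 0) (z : R) : {c | P.eval c = z}.encard ≤ P.natDegree := by
  classical
  have hne : P - C z ≠ 0 := fun h => hP (by rw [sub_eq_zero.1 h, natDegree_C])
  have hset : {c | P.eval c = z} = (P - C z).roots.toFinset := by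
    ext c
    simp [mem_roots hne, sub_eq_zero]
  rw [hset, encard_coe_eq_coe_finsetCard, Nat.cast_le]
  exact (Multiset.toFinset_card_le _).trans ((card_roots' _).trans_eq (natDegree_sub_C ..))

theorem isPreconnected_setOf_norm_pow_mem_Ioo (S t : ℝ) (d : ℕ) :
    IsPreconnected {w : ℂ | ‖w‖ ^ d ∈ Ioo S t} := by
  have hJ : {r : ℝ | 0 ≤ r ∧ r ^ d ∈ Ioo S t}.OrdConnected :=
    ⟨fun _ hx _ hy _ hr => ⟨hx.1.trans hr.1, hx.2.1.trans_le (pow_le_pow_left₀ hx.1 hr.1 d),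
      (pow_le_pow_left₀ (hx.1.trans hr.1) hr.2 d).trans_lt hy.2.2⟩⟩
  simpa using isPreconnected_setOf_norm_mem (one_lt_rank_real_of_complex ℂ) hJ

theorem isCompact_setOf_norm_eval_le {P : ℂ[X]} (hP : P.natDegree ≠ 0) (b : ℝ) :
    IsCompact {c : ℂ | ‖P.eval c‖ ≤ b} := by
  simpa [preimage, mem_closedBall_zero_iff] using
    (P.isProperMap_eval (natDegree_pos_iff_degree_pos.1 hP.bot_lt)).isCompact_preimage
      (isCompact_closedBall 0 b)

/-- A continuous `deg P`-th root of the polynomial `P` outside the lemniscate `‖P‖ = S`: a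
coordinate near infinity in which `P` is a monomial. -/
structure IsExteriorRoot (P : ℂ[X]) (S : ℝ) (Φ : ℂ → ℂ) : Prop where
  continuousOn : ContinuousOn Φ {c | S < ‖P.eval c‖}
  pow_eq : ∀ c, S < ‖P.eval c‖ → Φ c ^ P.natDegree = P.eval c

/-- A nonempty union of components of the interior `‖P‖ < t` of a lemniscate. That it is relatively
closed there is encoded by compactness of its intersections with the smaller lemniscates. -/
structure IsLemniscatePiece (P : ℂ[X]) (t : ℝ) (U : Set ℂ) : Prop where
  isOpen : IsOpen U
  nonempty : U.Nonempty
  norm_eval_lt : ∀ c ∈ U, ‖P.eval c‖ < t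
  isCompact_inter : ∀ b < t, IsCompact (U ∩ {c | ‖P.eval c‖ ≤ b})

variable {P : ℂ[X]} {Φ : ℂ → ℂ} {S t : ℝ} {U : Set ℂ}

theorem IsExteriorRoot.norm_pow_eq (h : IsExteriorRoot P S Φ) {c : ℂ} (hc : S < ‖P.eval c‖) :
    ‖Φ c‖ ^ P.natDegree = ‖P.eval c‖ := by
  rw [← norm_pow, h.pow_eq c hc]

theorem isOpen_setOf_lt_norm_eval (P : ℂ[X]) (S : ℝ) : IsOpen {c : ℂ | S < ‖P.eval c‖} :=
  isOpen_lt continuous_const P.continuous.norm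

theorem IsExteriorRoot.isOpen_image (h : IsExteriorRoot P S Φ) (hP : P.natDegree ≠ 0) (hS : 0 ≤ S)
    (hU : IsOpen U) (hUS : U ⊆ {c | S < ‖P.eval c‖}) : IsOpen (Φ '' U) := by
  rw [isOpen_iff_mem_nhds]
  rintro _ ⟨c, hc, rfl⟩
  have hΦc : Φ c ≠ 0 := fun h0 => by
    have hnorm := h.norm_pow_eq (hUS hc)
    rw [h0, norm_zero, zero_pow hP] at hnorm
    exact (hS.trans_lt (hUS hc)).ne hnorm
  obtain ⟨V, hV, hinj⟩ := exists_mem_nhds_injOn_pow hP hΦc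
  have hmem := (isOpen_setOf_lt_norm_eval P S).mem_nhds (hUS hc)
  have hcomp : (fun w => w ^ P.natDegree) ∘ Φ =ᶠ[𝓝 c] fun x => P.eval x :=
    eventually_of_mem hmem h.pow_eq
  refine nhds_le_map_nhds_of_comp (h.continuousOn.continuousAt hmem)
    (continuous_pow _).continuousAt hV hinj ?_ (image_mem_map (hU.mem_nhds hc))
  rw [map_congr hcomp, h.pow_eq c (hUS hc)]
  exact (P.isOpenQuotientMap_eval hP).isOpenMap.nhds_le c

namespace IsLemniscatePiece

theorem exists_lt_norm_eval (hU : IsLemniscatePiece P t U) (hSt : S < t) :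
    ∃ c ∈ U, S < ‖P.eval c‖ := by
  by_contra! hle
  have hcompact : IsCompact U := by
    simpa [inter_eq_left.2 (show U ⊆ {c | ‖P.eval c‖ ≤ S} from hle)] using hU.isCompact_inter S hSt
  rcases isClopen_iff.1 ⟨hcompact.isClosed, hU.isOpen⟩ with hempty | huniv
  · exact hU.nonempty.ne_empty hempty
  · exact noncompact_univ ℂ (huniv ▸ hcompact)

theorem closure_image_inter_subset (hU : IsLemniscatePiece P t U) (h : IsExteriorRoot P S Φ) :
    closure (Φ '' (U ∩ {c | S < ‖P.eval c‖})) ∩ {w | ‖w‖ ^ P.natDegree ∈ Ioo S t} ⊆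
      Φ '' (U ∩ {c | S < ‖P.eval c‖}) := by
  rintro w ⟨hw, hSw, hwt⟩
  obtain ⟨a, hSa, haw⟩ := exists_between hSw
  obtain ⟨b, hwb, hbt⟩ := exists_between hwt
  let T : Set ℂ := U ∩ {c | ‖P.eval c‖ ≤ b} ∩ {c | a ≤ ‖P.eval c‖}
  have hTS : T ⊆ {c | S < ‖P.eval c‖} := fun c hc => hSa.trans_le hc.2
  have hT : IsCompact T :=
    (hU.isCompact_inter b hbt).inter_right (isClosed_le continuous_const P.continuous.norm)
  have hannulus : IsOpen {x : ℂ | ‖x‖ ^ P.natDegree ∈ Ioo a b} :=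
    isOpen_Ioo.preimage (continuous_norm.pow _)
  have hsub :
      {x : ℂ | ‖x‖ ^ P.natDegree ∈ Ioo a b} ∩ Φ '' (U ∩ {c | S < ‖P.eval c‖}) ⊆ Φ '' T := by
    rintro _ ⟨hx, c, ⟨hcU, hcS⟩, rfl⟩
    rw [mem_ofPred_eq, h.norm_pow_eq hcS] at hx
    exact ⟨c, ⟨⟨hcU, hx.2.le⟩, hx.1.le⟩, rfl⟩
  have hclosed : IsClosed (Φ '' T) :=
    (hT.image_of_continuousOn (h.continuousOn.mono hTS)).isClosed
  have hwT : w ∈ Φ '' T := hclosed.closure_subset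
    (closure_mono hsub (hannulus.inter_closure ⟨⟨haw, hwb⟩, hw⟩))
  exact image_mono (subset_inter (fun c hc => hc.1.1) hTS) hwT

theorem annulus_subset_image (hU : IsLemniscatePiece P t U) (h : IsExteriorRoot P S Φ)
    (hP : P.natDegree ≠ 0) (hS : 0 ≤ S) (hSt : S < t) :
    {w | ‖w‖ ^ P.natDegree ∈ Ioo S t} ⊆ Φ '' (U ∩ {c | S < ‖P.eval c‖}) := by
  obtain ⟨c, hcU, hcS⟩ := hU.exists_lt_norm_eval hSt
  refine (isPreconnected_setOf_norm_pow_mem_Ioo S t _).subset_of_closure_inter_subset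
    (h.isOpen_image hP hS (hU.isOpen.inter (isOpen_setOf_lt_norm_eval P S)) inter_subset_right)
    ⟨Φ c, ?_, mem_image_of_mem Φ ⟨hcU, hcS⟩⟩ (hU.closure_image_inter_subset h)
  rw [mem_ofPred_eq, h.norm_pow_eq hcS]
  exact ⟨hcS, hU.norm_eval_lt c hcU⟩

theorem natDegree_le_encard (hU : IsLemniscatePiece P t U) (h : IsExteriorRoot P S Φ)
    (hP : P.natDegree ≠ 0) (hS : 0 ≤ S) {z : ℂ} (hz : ‖z‖ ∈ Ioo S t) :
    P.natDegree ≤ (U ∩ {c | P.eval c = z}).encard := by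
  have hroots : {w : ℂ | w ^ P.natDegree = z} ⊆ Φ '' (U ∩ {c | P.eval c = z}) := by
    intro w (hw : w ^ P.natDegree = z)
    have hwA : ‖w‖ ^ P.natDegree ∈ Ioo S t := by rwa [← norm_pow, hw]
    obtain ⟨c, ⟨hcU, hcS⟩, rfl⟩ := hU.annulus_subset_image h hP hS (hz.1.trans hz.2) hwA
    exact ⟨c, ⟨hcU, (h.pow_eq c hcS).symm.trans hw⟩, rfl⟩
  rw [← encard_setOf_pow_eq hP (norm_pos_iff.1 (hS.trans_lt hz.1))]
  exact (encard_le_encard hroots).trans (encard_image_le _ _)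

theorem not_disjoint (h : IsExteriorRoot P S Φ) (hP : P.natDegree ≠ 0) (hS : 0 ≤ S) (hSt : S < t)
    {V : Set ℂ} (hU : IsLemniscatePiece P t U) (hV : IsLemniscatePiece P t V) :
    ¬ Disjoint U V := by
  intro hUV
  obtain ⟨r, hr⟩ := exists_between hSt
  have hz : ‖(r : ℂ)‖ ∈ Ioo S t := by
    rwa [Complex.norm_of_nonneg (hS.trans hr.1.le)]
  have hcount : ((P.natDegree + P.natDegree : ℕ) : ℕ∞) ≤ P.natDegree := calc
    ((P.natDegree + P.natDegree : ℕ) : ℕ∞)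
      ≤ (U ∩ {c | P.eval c = r}).encard + (V ∩ {c | P.eval c = r}).encard := by
        push_cast
        exact add_le_add (hU.natDegree_le_encard h hP hS hz) (hV.natDegree_le_encard h hP hS hz)
    _ = ((U ∩ {c | P.eval c = r}) ∪ (V ∩ {c | P.eval c = r})).encard :=
        (encard_union_eq (hUV.mono inter_subset_left inter_subset_left)).symm
    _ ≤ {c | P.eval c = r}.encard :=
        encard_le_encard (union_subset inter_subset_right inter_subset_right)
    _ ≤ P.natDegree := encard_setOf_eval_eq_le hP _
  have := Nat.cast_le.1 hcount
  omega

theorem setOf_norm_eval_lt_inter (hP : P.natDegree ≠ 0) {V : Set ℂ} (hU : IsOpen U)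
    (hV : IsOpen V) (hcover : {c | ‖P.eval c‖ < t} ⊆ U ∪ V)
    (hdisj : {c | ‖P.eval c‖ < t} ∩ (U ∩ V) = ∅) (hsub : ¬ {c | ‖P.eval c‖ < t} ⊆ V) :
    IsLemniscatePiece P t ({c | ‖P.eval c‖ < t} ∩ U) where
  isOpen := (isOpen_lt P.continuous.norm continuous_const).inter hU
  nonempty := by
    obtain ⟨c, hct, hcV⟩ := not_subset.1 hsub
    exact ⟨c, hct, (hcover hct).resolve_right hcV⟩
  norm_eval_lt _ hc := hc.1
  isCompact_inter b hb := by
    convert (isCompact_setOf_norm_eval_le hP b).diff hV using 1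
    ext c
    constructor
    · rintro ⟨⟨hct, hcU⟩, hcb⟩
      exact ⟨hcb, fun hcV => hdisj.subset ⟨hct, hcU, hcV⟩⟩
    · rintro ⟨hcb, hcV⟩
      have hct : ‖P.eval c‖ < t := lt_of_le_of_lt hcb hb
      exact ⟨⟨hct, (hcover hct).resolve_right hcV⟩, hcb⟩

end IsLemniscatePiece

theorem IsExteriorRoot.isPreconnected_setOf_norm_eval_lt (h : IsExteriorRoot P S Φ)
    (hP : P.natDegree ≠ 0) (hS : 0 ≤ S) (hSt : S < t) :
    IsPreconnected {c : ℂ | ‖P.eval c‖ < t} := by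
  refine isPreconnected_iff_subset_of_disjoint.2 fun U V hU hV hcover hdisj => ?_
  by_contra! hsub
  refine IsLemniscatePiece.not_disjoint h hP hS hSt
    (.setOf_norm_eval_lt_inter hP hU hV hcover hdisj hsub.2)
    (.setOf_norm_eval_lt_inter hP hV hU ?_ ?_ hsub.1) ?_
  · rwa [union_comm]
  · rwa [inter_comm V U]
  · exact disjoint_left.2 fun c hcU hcV => hdisj.subset ⟨hcU.1, hcU.2, hcV.2⟩

theorem IsExteriorRoot.isPreconnected_setOf_norm_eval_le (h : IsExteriorRoot P S Φ)
    (hP : P.natDegree ≠ 0) (hS : 0 ≤ S) (hSt : S < t) :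
    IsPreconnected {c : ℂ | ‖P.eval c‖ ≤ t} := by
  have hclosure : closure {c : ℂ | ‖P.eval c‖ < t} = {c | ‖P.eval c‖ ≤ t} := by
    simpa [preimage, closure_ball (0 : ℂ) (hS.trans_lt hSt).ne'] using
      ((P.isOpenQuotientMap_eval hP).isOpenMap.preimage_closure_eq_closure_preimage
        P.continuous (ball 0 t)).symm
  exact hclosure ▸ (h.isPreconnected_setOf_norm_eval_lt hP hS hSt).closure

end Lemniscate

section Bottcher

/-- The domain of the inverse Böttcher coordinate of level `n` in the family `z ↦ z² + c`: the pairs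
`(c, u)` whose reciprocal coordinate `1 / u` has `2 ^ n`-th power beyond the radius `R c`, together
with infinity at `u = 0`. -/
def bottcherDisc (R : ℂ → ℝ≥0) (n : ℕ) : Set (ℂ × ℂ) :=
  {p | R p.1 * ‖p.2‖ ^ 2 ^ n < 1}

/-- The domain of the Böttcher coordinate of level `n`: the pairs `(c, z)` for which the `n`-th
iterate of `z` under `z ↦ z² + c` lies beyond the radius `R c`. -/
def escapeRegion (R : ℂ → ℝ≥0) (n : ℕ) : Set (ℂ × ℂ) :=
  {p | R p.1 < ‖(quadMap p.1)^[n] p.2‖}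

/-- Continuous Böttcher coordinates of level `n`, near infinity in the dynamical plane and jointly
in the parameter. The coordinate of `z` is a `2 ^ n`-th root of the `n`-th iterate of `z`; to keep
infinity at a finite place, `v (c, z)` is its reciprocal and `g (c, u) / u` is the point whose
coordinate is `1 / u`. -/
structure IsBottcherPair (R : ℂ → ℝ≥0) (n : ℕ) (g v : ℂ × ℂ → ℂ) : Prop where
  continuousOn_param : ContinuousOn g (bottcherDisc R n)
  param_zero : ∀ c, g (c, 0) = 1
  iterate_param : ∀ p ∈ bottcherDisc R n, p.2 ≠ 0 →
    (quadMap p.1)^[n] (g p / p.2) = (p.2 ^ 2 ^ n)⁻¹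
  continuousOn_coord : ContinuousOn v (escapeRegion R n)
  coord_pow : ∀ p ∈ escapeRegion R n, v p ^ 2 ^ n = ((quadMap p.1)^[n] p.2)⁻¹
  param_coord : ∀ p ∈ escapeRegion R n, g (p.1, v p) = p.2 * v p

theorem starConvex_bottcherDisc (R : ℂ → ℝ≥0) (n : ℕ) (c : ℂ) :
    StarConvex ℝ 0 (Prod.mk c ⁻¹' bottcherDisc R n) := by
  refine starConvex_zero_iff.2 fun u hu t ht0 ht1 => ?_
  refine lt_of_le_of_lt ?_ (show R c * ‖u‖ ^ 2 ^ n < 1 from hu)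
  have htu : ‖t • u‖ ≤ ‖u‖ := by
    rw [norm_smul, Real.norm_of_nonneg ht0]
    exact mul_le_of_le_one_left (norm_nonneg u) ht1
  change R c * ‖t • u‖ ^ 2 ^ n ≤ _
  gcongr

namespace IsBottcherPair

variable {R : ℂ → ℝ≥0} {n : ℕ} {g v : ℂ × ℂ → ℂ} {p : ℂ × ℂ}

theorem zero (R : ℂ → ℝ≥0) : IsBottcherPair R 0 (fun _ => 1) (fun p => p.2⁻¹) where
  continuousOn_param := continuousOn_const
  param_zero _ := rfl
  iterate_param p _ _ := by simp
  continuousOn_coord := continuousOn_snd.inv₀ fun p hp =>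
    norm_pos_iff.1 ((R p.1).coe_nonneg.trans_lt hp)
  coord_pow p _ := by simp
  param_coord p hp :=
    (mul_inv_cancel₀ (norm_pos_iff.1 ((R p.1).coe_nonneg.trans_lt hp))).symm

theorem mk_coord_mem (h : IsBottcherPair R n g v) (hp : p ∈ escapeRegion R n) :
    (p.1, v p) ∈ bottcherDisc R n := by
  have hp' : R p.1 < ‖(quadMap p.1)^[n] p.2‖ := hp
  have hpos : 0 < ‖(quadMap p.1)^[n] p.2‖ := (R p.1).coe_nonneg.trans_lt hp'
  change R p.1 * ‖v p‖ ^ 2 ^ n < 1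
  rwa [← norm_pow, h.coord_pow p hp, norm_inv, ← div_eq_mul_inv, div_lt_one hpos]

-- The next map `g'` must satisfy `(g' (c, u) / u) ^ 2 + c = g (c, u ^ 2) / u ^ 2`, that is,
-- `g' (c, u) ^ 2 = g (c, u ^ 2) - c * u ^ 2`.
theorem param_sub_ne_zero (h : IsBottcherPair R n g v)
    (hR : ∀ c, ‖(quadMap c)^[n] c‖ ≤ R c) (hp : p ∈ bottcherDisc R n) : g p - p.1 * p.2 ≠ 0 := by
  intro heq
  by_cases hu : p.2 = 0
  · have hg : g p = 1 := by rw [← h.param_zero p.1, ← hu]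
    simp [hg, hu] at heq
  · have hiter := h.iterate_param p hp hu
    rw [sub_eq_zero.1 heq, mul_div_cancel_right₀ _ hu] at hiter
    have hle := hR p.1
    rw [hiter, norm_inv, norm_pow, inv_le_iff_one_le_mul₀ (by positivity)] at hle
    exact hle.not_gt hp

theorem exists_sqrt_param_sub (h : IsBottcherPair R n g v) (hR : ∀ c, ‖(quadMap c)^[n] c‖ ≤ R c) :
    ∃ k : ℂ × ℂ → ℂ, ContinuousOn k (bottcherDisc R n) ∧
      (∀ p ∈ bottcherDisc R n, k p ^ 2 = g p - p.1 * p.2) ∧ ∀ c, k (c, 0) = 1 := by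
  obtain ⟨l, hl, hexp, hl0⟩ := exists_continuousOn_log_of_starConvex (starConvex_bottcherDisc R n)
    (h := fun p => g p - p.1 * p.2) (h.continuousOn_param.sub (by fun_prop))
    (fun p hp => h.param_sub_ne_zero hR hp) (fun p _ => by simp [h.param_zero])
  refine ⟨fun p => Complex.exp (l p / 2), by fun_prop, fun p hp => ?_, fun c => ?_⟩
  · rw [← hexp p hp, ← Complex.exp_nat_mul, Nat.cast_ofNat, mul_div_cancel₀ _ two_ne_zero]
  · have hmem : (c, (0 : ℂ)) ∈ bottcherDisc R n := by simp [bottcherDisc]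
    simp [hl0 _ hmem]

theorem exists_succ (h : IsBottcherPair R n g v) (hR : ∀ c, ‖(quadMap c)^[n] c‖ ≤ R c) :
    ∃ g' v', IsBottcherPair R (n + 1) g' v' := by
  obtain ⟨k, hk, hk2, hk0⟩ := h.exists_sqrt_param_sub hR
  have hdisc : ∀ p ∈ bottcherDisc R (n + 1), (p.1, p.2 ^ 2) ∈ bottcherDisc R n := fun p hp => by
    simpa [bottcherDisc, ← pow_mul, ← pow_succ'] using hp
  have hregion : ∀ p ∈ escapeRegion R (n + 1), (p.1, quadMap p.1 p.2) ∈ escapeRegion R n :=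
    fun p hp => hp
  have hne : ∀ p ∈ escapeRegion R (n + 1), p.2 ≠ 0 := fun p hp h0 =>
    (hR p.1).not_gt (by simpa [escapeRegion, h0, quadMap] using hp)
  let w : ℂ × ℂ → ℂ := fun p => v (p.1, quadMap p.1 p.2)
  have hw : ContinuousOn w (escapeRegion R (n + 1)) :=
    h.continuousOn_coord.comp (by unfold quadMap; fun_prop) hregion
  have hmem : ∀ p ∈ escapeRegion R (n + 1), (p.1, w p) ∈ bottcherDisc R n := fun p hp =>
    h.mk_coord_mem (hregion p hp)
  have hkw : ∀ p ∈ escapeRegion R (n + 1), (k (p.1, w p) / p.2) ^ 2 = w p := fun p hp => by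
    have hparam : g (p.1, w p) = quadMap p.1 p.2 * w p := h.param_coord _ (hregion p hp)
    rw [div_pow, div_eq_iff (pow_ne_zero 2 (hne p hp)), hk2 _ (hmem p hp), hparam, quadMap]
    ring
  refine ⟨fun p => k (p.1, p.2 ^ 2), fun p => k (p.1, w p) / p.2, ?_, ?_, ?_, ?_, ?_, ?_⟩
  · exact hk.comp (by fun_prop) hdisc
  · simpa using hk0
  · intro p hp hu
    have hstep : quadMap p.1 (k (p.1, p.2 ^ 2) / p.2) = g (p.1, p.2 ^ 2) / p.2 ^ 2 := by
      rw [quadMap, div_pow, hk2 _ (hdisc p hp)]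
      field_simp
      ring
    rw [Function.iterate_succ_apply, hstep, h.iterate_param _ (hdisc p hp) (pow_ne_zero 2 hu),
      ← pow_mul, ← pow_succ']
  · exact (hk.comp (continuousOn_fst.prodMk hw) hmem).div continuousOn_snd hne
  · intro p hp
    rw [pow_succ', pow_mul, hkw p hp, Function.iterate_succ_apply]
    exact h.coord_pow _ (hregion p hp)
  · intro p hp
    simp only [hkw p hp]
    exact (mul_div_cancel₀ _ (hne p hp)).symm

end IsBottcherPair

theorem exists_isBottcherPair {R : ℂ → ℝ≥0} {n : ℕ}
    (hR : ∀ c, ∀ i < n, ‖(quadMap c)^[i] c‖ ≤ R c) : ∃ g v, IsBottcherPair R n g v := by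
  induction n with
  | zero => exact ⟨_, _, .zero R⟩
  | succ n ih =>
    obtain ⟨g, v, h⟩ := ih fun c i hi => hR c i (hi.trans n.lt_succ_self)
    exact h.exists_succ fun c => hR c n n.lt_succ_self

end Bottcher

section CriticalOrbit

/-- The critical orbit polynomials: the value at `c` of the `n`-th one is the `n`-th point of the
orbit of `0` under `z ↦ z² + c`. -/
noncomputable def mandelbrotPoly : ℕ → ℂ[X]
  | 0 => 0
  | n + 1 => mandelbrotPoly n ^ 2 + X

theorem eval_mandelbrotPoly_succ (n : ℕ) (c : ℂ) :
    (mandelbrotPoly (n + 1)).eval c = quadMap c ((mandelbrotPoly n).eval c) := by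
  simp [mandelbrotPoly, quadMap]

theorem eval_mandelbrotPoly (n : ℕ) (c : ℂ) :
    (mandelbrotPoly n).eval c = (quadMap c)^[n] 0 := by
  induction n with
  | zero => simp [mandelbrotPoly]
  | succ n ih => rw [eval_mandelbrotPoly_succ, ih, Function.iterate_succ_apply']

theorem eval_mandelbrotPoly_succ_eq_iterate (n : ℕ) (c : ℂ) :
    (mandelbrotPoly (n + 1)).eval c = (quadMap c)^[n] c := by
  rw [eval_mandelbrotPoly, Function.iterate_succ_apply]
  simp [quadMap]

theorem natDegree_mandelbrotPoly_succ (n : ℕ) : (mandelbrotPoly (n + 1)).natDegree = 2 ^ n := by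
  induction n with
  | zero => simp [mandelbrotPoly]
  | succ n ih =>
    have hpow : (mandelbrotPoly (n + 1) ^ 2).natDegree = 2 ^ (n + 1) := by
      rw [natDegree_pow, ih, pow_succ']
    rw [mandelbrotPoly, natDegree_add_eq_left_of_natDegree_lt] <;> rw [hpow]
    rw [natDegree_X]
    exact Nat.one_lt_two_pow n.succ_ne_zero

theorem three_mul_norm_sub_two_le {c z : ℂ} (hz : 2 ≤ ‖z‖) (hcz : ‖c‖ ≤ ‖z‖) :
    3 * (‖z‖ - 2) ≤ ‖quadMap c z‖ - 2 := by
  have htri : ‖z‖ ^ 2 - ‖c‖ ≤ ‖quadMap c z‖ := by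
    rw [quadMap, ← norm_pow]
    exact norm_sub_le_norm_add (z ^ 2) c
  nlinarith

theorem three_pow_mul_norm_sub_two_le {c z : ℂ} (hz : 2 ≤ ‖z‖) (hcz : ‖c‖ ≤ ‖z‖) (k : ℕ) :
    3 ^ k * (‖z‖ - 2) ≤ ‖(quadMap c)^[k] z‖ - 2 := by
  induction k generalizing z with
  | zero => simp
  | succ k ih =>
    have hstep := three_mul_norm_sub_two_le hz hcz
    calc 3 ^ (k + 1) * (‖z‖ - 2) = 3 ^ k * (3 * (‖z‖ - 2)) := by ring
      _ ≤ 3 ^ k * (‖quadMap c z‖ - 2) := by gcongr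
      _ ≤ ‖(quadMap c)^[k + 1] z‖ - 2 := ih (by linarith) (by linarith)

theorem norm_le_norm_eval_mandelbrotPoly {n : ℕ} {c : ℂ}
    (h : 2 < ‖(mandelbrotPoly n).eval c‖) : ‖c‖ ≤ ‖(mandelbrotPoly n).eval c‖ := by
  obtain _ | n := n
  · exact absurd h (by norm_num [mandelbrotPoly])
  rw [eval_mandelbrotPoly_succ_eq_iterate] at h ⊢
  rcases le_total 2 ‖c‖ with hc | hc
  · have hpow : ‖c‖ - 2 ≤ 3 ^ n * (‖c‖ - 2) :=
      le_mul_of_one_le_left (sub_nonneg.2 hc) (one_le_pow₀ (by norm_num))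
    linarith [three_pow_mul_norm_sub_two_le hc le_rfl n]
  · exact hc.trans h.le

theorem three_pow_mul_norm_eval_mandelbrotPoly_sub_two_le {n : ℕ} {c : ℂ}
    (h : 2 < ‖(mandelbrotPoly n).eval c‖) (k : ℕ) :
    3 ^ k * (‖(mandelbrotPoly n).eval c‖ - 2) ≤ ‖(mandelbrotPoly (n + k)).eval c‖ - 2 := by
  have hiter : (mandelbrotPoly (n + k)).eval c = (quadMap c)^[k] ((mandelbrotPoly n).eval c) := by
    rw [eval_mandelbrotPoly, eval_mandelbrotPoly, add_comm, Function.iterate_add_apply]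
  rw [hiter]
  exact three_pow_mul_norm_sub_two_le h.le (norm_le_norm_eval_mandelbrotPoly h) k

theorem norm_eval_mandelbrotPoly_lt_of_lt {m n : ℕ} {c : ℂ} (hmn : m < n)
    (h : 2 < ‖(mandelbrotPoly n).eval c‖) :
    ‖(mandelbrotPoly m).eval c‖ < ‖(mandelbrotPoly n).eval c‖ := by
  rcases le_or_gt ‖(mandelbrotPoly m).eval c‖ 2 with hm | hm
  · exact hm.trans_lt h
  obtain ⟨k, rfl⟩ := Nat.exists_eq_add_of_lt hmn
  have hgrow := three_pow_mul_norm_eval_mandelbrotPoly_sub_two_le hm (k + 1)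
  have hpow : (1 : ℝ) < 3 ^ (k + 1) := one_lt_pow₀ (by norm_num) k.succ_ne_zero
  rw [← add_assoc] at hgrow
  nlinarith

theorem mem_mandelbrot_iff {r : ℝ} (hr : 2 ≤ r) {c : ℂ} :
    c ∈ mandelbrot ↔ ∀ n, ‖(mandelbrotPoly n).eval c‖ ≤ r := by
  simp only [mandelbrot, mem_ofPred_eq, ← eval_mandelbrotPoly]
  refine ⟨fun ⟨B, hB⟩ n => ?_, fun h => ⟨r, h⟩⟩
  by_contra! hn
  have h2 : 2 < ‖(mandelbrotPoly n).eval c‖ := hr.trans_lt hn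
  obtain ⟨k, hk⟩ := pow_unbounded_of_one_lt (B / (‖(mandelbrotPoly n).eval c‖ - 2))
    (by norm_num : (1 : ℝ) < 3)
  rw [div_lt_iff₀ (by linarith)] at hk
  linarith [three_pow_mul_norm_eval_mandelbrotPoly_sub_two_le h2 k, hB (n + k)]

theorem exists_isExteriorRoot_mandelbrotPoly (n : ℕ) :
    ∃ Φ, IsExteriorRoot (mandelbrotPoly (n + 1)) 2 Φ := by
  let R : ℂ → ℝ≥0 := fun c => (Finset.range n).sup fun i => ‖(quadMap c)^[i] c‖₊
  have hR : ∀ c, ∀ i < n, ‖(quadMap c)^[i] c‖ ≤ R c := fun c i hi =>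
    Finset.le_sup (f := fun i => ‖(quadMap c)^[i] c‖₊) (Finset.mem_range.2 hi)
  obtain ⟨g, v, h⟩ := exists_isBottcherPair hR
  have hdiag : ∀ c, 2 < ‖(mandelbrotPoly (n + 1)).eval c‖ → (c, c) ∈ escapeRegion R n := by
    intro c hc
    change R c < ‖(quadMap c)^[n] c‖
    rw [← eval_mandelbrotPoly_succ_eq_iterate, ← coe_nnnorm, NNReal.coe_lt_coe]
    refine (Finset.sup_lt_iff (zero_lt_two.trans hc)).2 fun i hi => ?_
    have hlt := norm_eval_mandelbrotPoly_lt_of_lt (Nat.succ_lt_succ (Finset.mem_range.1 hi)) hc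
    rwa [eval_mandelbrotPoly_succ_eq_iterate] at hlt
  have hpow : ∀ c, 2 < ‖(mandelbrotPoly (n + 1)).eval c‖ →
      (v (c, c))⁻¹ ^ 2 ^ n = (mandelbrotPoly (n + 1)).eval c := fun c hc => by
    rw [inv_pow, h.coord_pow _ (hdiag c hc), inv_inv, eval_mandelbrotPoly_succ_eq_iterate]
  refine ⟨fun c => (v (c, c))⁻¹, ContinuousOn.inv₀ ?_ fun c hc hv => ?_, ?_⟩
  · exact h.continuousOn_coord.comp (by fun_prop) hdiag
  · have heval := hpow c hc
    rw [hv, inv_zero, zero_pow (by positivity)] at heval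
    exact absurd hc (by simp [← heval])
  · rwa [natDegree_mandelbrotPoly_succ]

end CriticalOrbit

section Mandelbrot

theorem mandelbrot_eq_iInter {r : ℝ} (hr : 2 ≤ r) :
    mandelbrot = ⋂ n, {c | ‖(mandelbrotPoly (n + 1)).eval c‖ ≤ r} := by
  ext c
  rw [mem_mandelbrot_iff hr, mem_iInter]
  refine ⟨fun h n => h (n + 1), fun h n => ?_⟩
  obtain _ | n := n
  · simpa [mandelbrotPoly] using zero_le_two.trans hr
  · exact h n

theorem natDegree_mandelbrotPoly_succ_ne_zero (n : ℕ) :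
    (mandelbrotPoly (n + 1)).natDegree ≠ 0 := by
  rw [natDegree_mandelbrotPoly_succ]
  positivity

theorem antitone_setOf_norm_eval_mandelbrotPoly_le {r : ℝ} (hr : 2 ≤ r) :
    Antitone fun n => {c : ℂ | ‖(mandelbrotPoly (n + 1)).eval c‖ ≤ r} := by
  refine antitone_nat_of_succ_le fun n c (hc : ‖_‖ ≤ r) => ?_
  by_contra hgt
  have hlt : r < ‖(mandelbrotPoly (n + 1)).eval c‖ := not_le.1 hgt
  have hgrow := three_pow_mul_norm_eval_mandelbrotPoly_sub_two_le (hr.trans_lt hlt) 1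
  linarith

theorem isPreconnected_setOf_norm_eval_mandelbrotPoly_le {r : ℝ} (hr : 2 < r) (n : ℕ) :
    IsPreconnected {c : ℂ | ‖(mandelbrotPoly (n + 1)).eval c‖ ≤ r} :=
  have ⟨_, hΦ⟩ := exists_isExteriorRoot_mandelbrotPoly n
  hΦ.isPreconnected_setOf_norm_eval_le (natDegree_mandelbrotPoly_succ_ne_zero n) zero_le_two hr

theorem isCompact_mandelbrot : IsCompact mandelbrot := by
  rw [mandelbrot_eq_iInter le_rfl]
  have hcompact : ∀ n, IsCompact {c : ℂ | ‖(mandelbrotPoly (n + 1)).eval c‖ ≤ 2} := fun n =>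
    isCompact_setOf_norm_eval_le (natDegree_mandelbrotPoly_succ_ne_zero n) 2
  exact (hcompact 0).of_isClosed_subset (isClosed_iInter fun n => (hcompact n).isClosed)
    (iInter_subset _ 0)

theorem zero_mem_mandelbrot : (0 : ℂ) ∈ mandelbrot :=
  ⟨0, fun n => by rw [Function.iterate_fixed (by simp [quadMap]), norm_zero]⟩

theorem isConnected_mandelbrot : IsConnected mandelbrot := by
  refine ⟨⟨0, zero_mem_mandelbrot⟩, ?_⟩
  rw [mandelbrot_eq_iInter (r := 3) (by norm_num)]
  exact isPreconnected_iInter_of_directed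
    (antitone_setOf_norm_eval_mandelbrotPoly_le (by norm_num)).directed_ge
    (fun n => isCompact_setOf_norm_eval_le (natDegree_mandelbrotPoly_succ_ne_zero n) 3)
    (isPreconnected_setOf_norm_eval_mandelbrotPoly_le (by norm_num))

theorem isConnected_compl_mandelbrot : IsConnected mandelbrotᶜ := by
  have heq : mandelbrot = {c | ∀ n, ‖(mandelbrotPoly n).eval c‖ ≤ 2} :=
    ext fun _ => mem_mandelbrot_iff le_rfl
  have hbounded := isCompact_mandelbrot.isBounded
  rw [heq] at hbounded ⊢
  exact isConnected_compl_setOf_forall_norm_le (fun n => (mandelbrotPoly n).differentiable) hbounded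

end Mandelbrot

/-- The Mandelbrot set is compact, connected, and full (its complement is connected). -/
theorem mandelbrot_compact_connected_full :
    IsCompact mandelbrot ∧ IsConnected mandelbrot ∧ IsConnected mandelbrotᶜ :=
  ⟨isCompact_mandelbrot, isConnected_mandelbrot, isConnected_compl_mandelbrot⟩
end

section
/- If φ : Λ × X → ℂ is a holomorphic motion of a set X ⊂ ℂ over a connected open set Λ ⊂ ℂ with basepoint λ₀, then φ extends uniquely to a holomorphic motion of the closure of X, and for each λ the map φ_λ restricted to the closure of X is continuous and injective. -/
/-- `φ` is a holomorphic motion of `X ⊆ ℂ` over `Λ` with center `l₀`. -/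
def IsHolomorphicMotion (Λ : Set ℂ) (l₀ : ℂ) (X : Set ℂ) (φ : ℂ → ℂ → ℂ) : Prop :=
  (∀ z ∈ X, DifferentiableOn ℂ (fun l => φ l z) Λ) ∧
  (∀ l ∈ Λ, Set.InjOn (φ l) X) ∧
  (∀ z ∈ X, φ l₀ z = z)

/-!
For distinct `a`, `b`, `z` in `X`, the cross-ratio `(φ l z - φ l a) / (φ l b - φ l a)` is a
holomorphic function of `l` omitting `0` and `1`, so Schottky's theorem bounds `φ l z` locally
uniformly in `l` as long as `φ c z` stays bounded at one parameter `c`. Given such bounds, the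
difference `φ l z - φ l w` is a bounded zero-free function, and a Harnack estimate for the logarithm
of its modulus shows that it is small at all `l` near `c` once it is small at `c`. Hence
convergence of `φ c` along a filter on `X` carries over to nearby parameters and, `Λ` being
connected, to all of `Λ`. Starting from `φ l₀ = id` and the filters `𝓝[X] z` one obtains the
values of the extension at closure points `z`; going from `l` back to `l₀` along
`𝓝[X] z ⊔ 𝓝[X] w` shows that the extension is injective.
-/

open Metric Set Complex Filter Topology

section Branches

variable {f : ℂ → ℂ} {U : Set ℂ} {c : ℂ}

lemma differentiableOn_of_cexp {g : ℂ → ℂ} (hU : IsOpen U) (hg : ContinuousOn g U)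
    (hexp : DifferentiableOn ℂ (fun z => exp (g z)) U) : DifferentiableOn ℂ g U := by
  intro z hz
  have hgz : ContinuousAt g z := hg.continuousAt (hU.mem_nhds hz)
  have hlog : DifferentiableAt ℂ (fun w => g z + log (exp (g w) / exp (g z))) z := by
    refine ((((hexp.differentiableAt (hU.mem_nhds hz)).div_const _).clog ?_).const_add _)
    simp [exp_ne_zero]
  refine (hlog.congr_of_eventuallyEq ?_).differentiableWithinAt
  filter_upwards [hgz.eventually (ball_mem_nhds (g z) Real.pi_pos)] with w hw
  have him : |(g w - g z).im| < Real.pi :=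
    (abs_im_le_norm _).trans_lt (by rwa [← dist_eq_norm])
  rw [← exp_sub, log_exp (abs_lt.1 him).1 (abs_lt.1 him).2.le, add_sub_cancel]

lemma exists_differentiableOn_exp_eq (hUc : IsSimplyConnected U) (hU : IsOpen U)
    (hf : DifferentiableOn ℂ f U) (h0 : ∀ z ∈ U, f z ≠ 0) (hc : c ∈ U) :
    ∃ g : ℂ → ℂ, DifferentiableOn ℂ g U ∧ g c = log (f c) ∧ ∀ z ∈ U, exp (g z) = f z := by
  obtain ⟨g, hg, hgf⟩ := exists_continuousOn_eqOn_exp_comp hUc hU hf.continuousOn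
    (by rintro ⟨z, hz, hfz⟩; exact h0 z hz hfz)
  have hexp : ∀ z ∈ U, exp (g z) = f z := hgf
  refine ⟨fun z => g z - g c + log (f c), ?_, by simp, fun z hz => ?_⟩
  · exact ((differentiableOn_of_cexp hU hg (hf.congr hexp)).sub_const _).add_const _
  · rw [exp_add, exp_sub, exp_log (h0 c hc), hexp z hz, hexp c hc, div_mul_cancel₀ _ (h0 c hc)]

lemma norm_log_le_add_pi {z : ℂ} {B : ℝ} (hz : z ≠ 0) (hB : ‖z‖ ≤ B) (hB' : ‖z⁻¹‖ ≤ B) :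
    ‖log z‖ ≤ B + Real.pi := by
  have hpos : 0 < ‖z‖ := norm_pos_iff.2 hz
  have hlog : |Real.log ‖z‖| ≤ B := by
    have hle := Real.log_le_sub_one_of_pos hpos
    have hle' := Real.log_le_sub_one_of_pos (inv_pos.2 hpos)
    rw [Real.log_inv, ← norm_inv] at hle'
    exact abs_le.2 ⟨by linarith, by linarith⟩
  calc ‖log z‖ ≤ |(log z).re| + |(log z).im| := norm_le_abs_re_add_abs_im _
    _ ≤ B + Real.pi := by rw [log_re, log_im]; exact add_le_add hlog (abs_arg_le_pi z)

lemma norm_pi_mul_I : ‖(Real.pi * I : ℂ)‖ = Real.pi := by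
  rw [norm_mul, norm_I, mul_one, norm_real, Real.norm_of_nonneg Real.pi_pos.le]

lemma exists_differentiableOn_exp_pi_mul_I_eq (hUc : IsSimplyConnected U) (hU : IsOpen U)
    (hf : DifferentiableOn ℂ f U) (h0 : ∀ z ∈ U, f z ≠ 0) (hc : c ∈ U) :
    ∃ g : ℂ → ℂ, DifferentiableOn ℂ g U ∧ ‖g c‖ ≤ ‖log (f c)‖ / Real.pi + 1 ∧
      ∀ z ∈ U, exp (Real.pi * I * (g z + 1)) = f z := by
  obtain ⟨L, hL, hLc, hLe⟩ := exists_differentiableOn_exp_eq hUc hU hf h0 hc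
  have hpiI : (Real.pi * I : ℂ) ≠ 0 := mul_ne_zero (ofReal_ne_zero.2 Real.pi_ne_zero) I_ne_zero
  refine ⟨fun z => L z / (Real.pi * I) - 1, (hL.div_const _).sub_const 1, ?_, fun z hz => ?_⟩
  · exact (norm_sub_le _ _).trans_eq (by rw [norm_div, norm_pi_mul_I, norm_one, hLc])
  · rw [sub_add_cancel, mul_div_cancel₀ _ hpiI, hLe z hz]

lemma exists_differentiableOn_cosh_eq (hUc : IsSimplyConnected U) (hU : IsOpen U)
    (hf : DifferentiableOn ℂ f U) (h1 : ∀ z ∈ U, f z ≠ 1) (h1' : ∀ z ∈ U, f z ≠ -1) (hc : c ∈ U) :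
    ∃ g : ℂ → ℂ, DifferentiableOn ℂ g U ∧ ‖g c‖ ≤ 2 * ‖f c‖ + 1 + Real.pi ∧
      ∀ z ∈ U, cosh (g z) = f z := by
  obtain ⟨L, hL, -, hLe⟩ := exists_differentiableOn_exp_eq (f := fun z => f z ^ 2 - 1) hUc hU
    ((hf.pow 2).sub_const 1) (fun z hz h => (sq_eq_one_iff.1 (sub_eq_zero.1 h)).elim (h1 z hz)
      (h1' z hz)) hc
  set s : ℂ → ℂ := fun z => exp (L z / 2)
  have hs : DifferentiableOn ℂ s U := (hL.div_const 2).cexp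
  have hs2 : ∀ z ∈ U, s z ^ 2 = f z ^ 2 - 1 := fun z hz => by
    rw [← hLe z hz, ← exp_nat_mul, Nat.cast_ofNat, mul_div_cancel₀ _ two_ne_zero]
  have hmul : ∀ z ∈ U, (f z + s z) * (f z - s z) = 1 := fun z hz => by
    linear_combination -hs2 z hz
  have hsc : ‖s c‖ ≤ ‖f c‖ + 1 := by
    refine le_of_sq_le_sq ?_ (by positivity)
    calc ‖s c‖ ^ 2 = ‖f c ^ 2 - 1‖ := by rw [← norm_pow, hs2 c hc]
      _ ≤ ‖f c‖ ^ 2 + 1 := (norm_sub_le _ _).trans_eq (by rw [norm_pow, norm_one])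
      _ ≤ (‖f c‖ + 1) ^ 2 := by nlinarith [norm_nonneg (f c)]
  obtain ⟨g, hg, hgc, hge⟩ := exists_differentiableOn_exp_eq (f := fun z => f z + s z) hUc hU
    (hf.add hs) (fun z hz => left_ne_zero_of_mul_eq_one (hmul z hz)) hc
  have hinv : ∀ z ∈ U, (f z + s z)⁻¹ = f z - s z := fun z hz =>
    inv_eq_of_mul_eq_one_right (hmul z hz)
  refine ⟨g, hg, ?_, fun z hz => ?_⟩
  · rw [hgc]
    refine norm_log_le_add_pi (left_ne_zero_of_mul_eq_one (hmul c hc)) ?_ ?_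
    · linarith [norm_add_le (f c) (s c)]
    · rw [hinv c hc]
      linarith [norm_sub_le (f c) (s c)]
  · rw [cosh, exp_neg, hge z hz, hinv z hz]
    ring

end Branches

section Bloch

variable {f : ℂ → ℂ}

lemma ball_subset_image_closedBall_of_norm_deriv_sub_le {p : ℂ} {t : ℝ} (ht : 0 < t)
    (hf : ∀ z ∈ closedBall p t, DifferentiableAt ℂ f z)
    (hd : ∀ z ∈ closedBall p t, ‖deriv f z - deriv f p‖ ≤ ‖deriv f p‖ / 2) :
    ball (f p) (‖deriv f p‖ * t / 4) ⊆ f '' closedBall p t := by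
  by_cases hp : deriv f p = 0
  · simp [hp]
  have hpt : p ∈ closedBall p t := mem_closedBall_self ht.le
  have hsphere : ∀ z ∈ sphere p t, ‖deriv f p‖ * t / 2 ≤ ‖f z - f p‖ := by
    intro z hz
    have hzp : ‖z - p‖ = t := mem_sphere_iff_norm.1 hz
    have hlin : ‖(f z - deriv f p * z) - (f p - deriv f p * p)‖ ≤ ‖deriv f p‖ / 2 * ‖z - p‖ := by
      refine (convex_closedBall p t).norm_image_sub_le_of_norm_hasDerivWithin_le
        (f := fun w => f w - deriv f p * w) (fun w hw => ?_) hd hpt (sphere_subset_closedBall hz)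
      simpa using
        ((hf w hw).hasDerivAt.fun_sub ((hasDerivAt_id w).const_mul (deriv f p))).hasDerivWithinAt
    have hsplit : deriv f p * (z - p) =
        (f z - f p) - ((f z - deriv f p * z) - (f p - deriv f p * p)) := by ring
    have hle := norm_sub_le (f z - f p) ((f z - deriv f p * z) - (f p - deriv f p * p))
    rw [← hsplit, norm_mul, hzp] at hle
    rw [hzp] at hlin
    linarith
  have hcont : DiffContOnCl ℂ f (ball p t) := DifferentiableOn.diffContOnCl fun z hz =>
    (hf z (closure_ball_subset_closedBall hz)).differentiableWithinAt
  have hne : ∃ᶠ z in 𝓝 p, f z ≠ f p :=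
    ((hf p hpt).hasDerivAt.eventually_ne hp).frequently.filter_mono nhdsWithin_le_nhds
  convert hcont.ball_subset_image_closedBall ht hsphere hne using 2
  ring

lemma exists_closedBall_norm_deriv_le_two_mul {c : ℂ} {R : ℝ} (hR : 0 < R)
    (hf : AnalyticOnNhd ℂ f (closedBall c R)) :
    ∃ p, ∃ t > 0, closedBall p t ⊆ closedBall c R ∧ R / 3 * ‖deriv f c‖ ≤ t * ‖deriv f p‖ ∧
      ∀ z ∈ closedBall p t, ‖deriv f z‖ ≤ 2 * ‖deriv f p‖ := by
  have hcont : Continuous fun z : closedBall c R => ‖deriv f z‖ :=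
    (continuousOn_iff_continuous_domRestrict.1 hf.deriv.continuousOn).norm
  obtain ⟨t, ht, ⟨p, hp⟩, htR, hpc, hle, hbound⟩ := hofer
    (⟨c, mem_closedBall_self hR.le⟩ : closedBall c R) (R / 3) (by positivity) hcont
    fun _ => norm_nonneg _
  have hpc' : dist p c ≤ 2 * (R / 3) := hpc
  have hsub : closedBall p t ⊆ closedBall c R := closedBall_subset_closedBall' (by linarith)
  exact ⟨p, t, ht, hsub, hle, fun z hz => hbound ⟨z, hsub hz⟩ (by rwa [dist_comm])⟩

lemma exists_ball_subset_image_closedBall {c : ℂ} {R : ℝ} (hR : 0 < R)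
    (hf : AnalyticOnNhd ℂ f (closedBall c R)) :
    ∃ w, ball w (R * ‖deriv f c‖ / 72) ⊆ f '' closedBall c R := by
  obtain ⟨p, t, ht, hsub, hle, hbound⟩ := exists_closedBall_norm_deriv_le_two_mul hR hf
  have hmaps : MapsTo (deriv f) (ball p t) (closedBall (deriv f p) (3 * ‖deriv f p‖)) := by
    intro z hz
    rw [mem_closedBall_iff_norm]
    linarith [norm_sub_le (deriv f z) (deriv f p), hbound z (ball_subset_closedBall hz)]
  have hsub' : closedBall p (t / 6) ⊆ ball p t := closedBall_subset_ball (by linarith)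
  have hball : ball p t ⊆ closedBall c R := ball_subset_closedBall.trans hsub
  have hschwarz : ∀ z ∈ closedBall p (t / 6), ‖deriv f z - deriv f p‖ ≤ ‖deriv f p‖ / 2 := by
    intro z hz
    calc ‖deriv f z - deriv f p‖ = dist (deriv f z) (deriv f p) := (dist_eq_norm _ _).symm
      _ ≤ 3 * ‖deriv f p‖ / t * dist z p := dist_le_div_mul_dist_of_mapsTo_ball
          (hf.deriv.differentiableOn.mono hball) hmaps (hsub' hz)
      _ ≤ 3 * ‖deriv f p‖ / t * (t / 6) := by gcongr; exact hz
      _ = ‖deriv f p‖ / 2 := by field_simp; ring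
  refine ⟨f p, ?_⟩
  calc ball (f p) (R * ‖deriv f c‖ / 72) ⊆ ball (f p) (‖deriv f p‖ * (t / 6) / 4) :=
        ball_subset_ball (by linarith)
    _ ⊆ f '' closedBall p (t / 6) := ball_subset_image_closedBall_of_norm_deriv_sub_le
        (by positivity) (fun z hz => (hf z (hball (hsub' hz))).differentiableAt) hschwarz
    _ ⊆ f '' closedBall c R := image_mono (hsub'.trans hball)

lemma norm_deriv_le_of_forall_ball_inter_nonempty {S : Set ℂ} {c : ℂ} {R ρ : ℝ} (hR : 0 < R)
    (hf : AnalyticOnNhd ℂ f (closedBall c R)) (hfS : ∀ z ∈ closedBall c R, f z ∉ S)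
    (hS : ∀ w, (S ∩ ball w ρ).Nonempty) : ‖deriv f c‖ ≤ 72 * ρ / R := by
  obtain ⟨w, hw⟩ := exists_ball_subset_image_closedBall hR hf
  obtain ⟨q, hqS, hq⟩ := hS w
  by_contra! hlt
  rw [div_lt_iff₀ hR] at hlt
  obtain ⟨z, hz, rfl⟩ := hw (ball_subset_ball (by linarith) hq)
  exact hfS z hz hqS

lemma norm_sub_le_of_forall_ball_inter_nonempty {S : Set ℂ} {c z : ℂ} {r ρ : ℝ}
    (hf : DifferentiableOn ℂ f (ball c r)) (hfS : ∀ z ∈ ball c r, f z ∉ S)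
    (hS : ∀ w, (S ∩ ball w ρ).Nonempty) (hz : z ∈ ball c (r / 2)) : ‖f z - f c‖ ≤ 72 * ρ := by
  have hr : 0 < r / 2 := pos_of_mem_ball hz
  have hsub : ∀ w ∈ ball c (r / 2), closedBall w (r / 2) ⊆ ball c r := fun w hw =>
    (closedBall_subset_ball' (by linarith [mem_ball.1 hw]))
  have han : AnalyticOnNhd ℂ f (ball c r) := hf.analyticOnNhd isOpen_ball
  have hderiv : ∀ w ∈ ball c (r / 2), ‖deriv f w‖ ≤ 72 * ρ / (r / 2) := fun w hw =>
    norm_deriv_le_of_forall_ball_inter_nonempty hr (han.mono (hsub w hw))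
      (fun y hy => hfS y (hsub w hw hy)) hS
  have hρ : 0 < ρ := (hS 0).elim fun q hq => pos_of_mem_ball hq.2
  calc ‖f z - f c‖ ≤ 72 * ρ / (r / 2) * ‖z - c‖ :=
        (convex_ball c (r / 2)).norm_image_sub_le_of_norm_deriv_le (fun w hw =>
          (han w (ball_subset_ball (by linarith) hw)).differentiableAt) hderiv
          (mem_ball_self hr) hz
    _ ≤ 72 * ρ / (r / 2) * (r / 2) := by gcongr; exact (mem_ball_iff_norm.1 hz).le
    _ = 72 * ρ := div_mul_cancel₀ _ hr.ne'

end Bloch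

lemma real_cosh_add_two_le_cosh_add_two {t : ℝ} (ht : 0 ≤ t) :
    Real.cosh t + 2 ≤ Real.cosh (t + 2) := by
  have hcosh : 3 ≤ Real.cosh 2 := by
    have hone : 1 ≤ Real.sinh 1 := Real.self_le_sinh_iff.2 zero_le_one
    have htwo : Real.cosh 2 = Real.cosh 1 ^ 2 + Real.sinh 1 ^ 2 := by
      rw [← Real.cosh_two_mul, mul_one]
    nlinarith [Real.cosh_sq 1]
  have hsinh : 0 ≤ Real.sinh t * Real.sinh 2 :=
    mul_nonneg (Real.sinh_nonneg_iff.2 ht) (Real.sinh_nonneg_iff.2 zero_le_two)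
  rw [Real.cosh_add]
  nlinarith [Real.one_le_cosh t]

lemma exists_odd_mem_Icc (x : ℝ) : ∃ n : ℤ, Odd n ∧ (n : ℝ) ∈ Icc x (x + 2) := by
  refine ⟨2 * ⌈(x - 1) / 2⌉ + 1, odd_two_mul_add_one _, ?_⟩
  push_cast
  constructor <;> linarith [Int.le_ceil ((x - 1) / 2), Int.ceil_lt_add_one ((x - 1) / 2)]

lemma exists_real_cosh_eq_odd (t : ℝ) : ∃ s, |s - t| ≤ 2 ∧ ∃ n : ℤ, Odd n ∧ Real.cosh s = n := by
  wlog ht : 0 ≤ t generalizing t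
  · obtain ⟨s, hs, n, hn, hsn⟩ := this (-t) (by linarith)
    refine ⟨-s, ?_, n, hn, by rwa [Real.cosh_neg]⟩
    rwa [← abs_neg, neg_sub, sub_neg_eq_add, add_comm, ← sub_neg_eq_add]
  obtain ⟨n, hn, hnt, hnt'⟩ := exists_odd_mem_Icc (Real.cosh t)
  obtain ⟨s, ⟨hts, hst⟩, hs⟩ := intermediate_value_Icc (by linarith : t ≤ t + 2)
    Real.continuous_cosh.continuousOn
    ⟨hnt, hnt'.trans (real_cosh_add_two_le_cosh_add_two ht)⟩
  exact ⟨s, abs_le.2 ⟨by linarith, by linarith⟩, n, hn, hs⟩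

lemma exists_mem_ball_cosh_eq_odd (w : ℂ) : ∃ q ∈ ball w 6, ∃ n : ℤ, Odd n ∧ cosh q = n := by
  obtain ⟨s, hs, n, hn, hsn⟩ := exists_real_cosh_eq_odd w.re
  set k : ℤ := round (w.im / (2 * Real.pi))
  have hk : |k * (2 * Real.pi) - w.im| < 4 := by
    have hsplit : k * (2 * Real.pi) - w.im = -(w.im / (2 * Real.pi) - k) * (2 * Real.pi) := by
      field_simp
      ring
    calc |k * (2 * Real.pi) - w.im| = |w.im / (2 * Real.pi) - k| * (2 * Real.pi) := by
          rw [hsplit, abs_mul, abs_neg, abs_of_pos Real.two_pi_pos]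
      _ ≤ 1 / 2 * (2 * Real.pi) := by gcongr; exact abs_sub_round _
      _ < 4 := by linarith [Real.pi_lt_four]
  refine ⟨s + k * (2 * Real.pi * I), ?_, n, hn, ?_⟩
  · have hre : (s + k * (2 * Real.pi * I) - w : ℂ).re = s - w.re := by simp
    have him : (s + k * (2 * Real.pi * I) - w : ℂ).im = k * (2 * Real.pi) - w.im := by simp
    rw [mem_ball_iff_norm]
    refine (norm_le_abs_re_add_abs_im _).trans_lt ?_
    rw [hre, him]
    linarith
  · rw [cosh_periodic.int_mul k s, ← ofReal_cosh, hsn, ofReal_intCast]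

lemma norm_cosh_le_exp_norm (z : ℂ) : ‖cosh z‖ ≤ Real.exp ‖z‖ := by
  have hpos : ‖exp z‖ ≤ Real.exp ‖z‖ := norm_exp_le_exp_norm z
  have hneg : ‖exp (-z)‖ ≤ Real.exp ‖z‖ := (norm_exp_le_exp_norm (-z)).trans_eq (by rw [norm_neg])
  rw [cosh, norm_div, Complex.norm_ofNat, div_le_iff₀ two_pos]
  linarith [norm_add_le (exp z) (exp (-z))]

lemma isSimplyConnected_of_convex {E : Type*} [AddCommGroup E] [Module ℝ E] [TopologicalSpace E]
    [ContinuousAdd E] [ContinuousSMul ℝ E] {s : Set E} (hs : Convex ℝ s) (hne : s.Nonempty) :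
    IsSimplyConnected s := by
  have := hs.contractibleSpace hne
  exact SimplyConnectedSpace.ofContractible s

lemma isSimplyConnected_ball {c z : ℂ} {r : ℝ} (hz : z ∈ ball c r) : IsSimplyConnected (ball c r) :=
  isSimplyConnected_of_convex (convex_ball c r) ⟨z, hz⟩

section Schottky

variable {f : ℂ → ℂ} {c z : ℂ} {r : ℝ}

lemma norm_le_exp_of_ne_odd (hf : DifferentiableOn ℂ f (ball c r))
    (hodd : ∀ w ∈ ball c r, ∀ n : ℤ, Odd n → f w ≠ n) (hz : z ∈ ball c (r / 2)) :
    ‖f z‖ ≤ Real.exp (2 * ‖f c‖ + 437) := by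
  have hr : 0 < r / 2 := pos_of_mem_ball hz
  have hc : c ∈ ball c r := mem_ball_self (by linarith)
  have hzr : z ∈ ball c r := ball_subset_ball (by linarith) hz
  obtain ⟨g, hg, hgc, hge⟩ := exists_differentiableOn_cosh_eq (isSimplyConnected_ball hc)
    isOpen_ball hf (fun w hw => by simpa using hodd w hw 1 odd_one)
    (fun w hw => by simpa using hodd w hw (-1) odd_neg_one) hc
  -- `g` omits the preimages of the odd integers under `cosh`, a net in `ℂ`, so Bloch applies.
  have hdist : ‖g z - g c‖ ≤ 72 * 6 :=
    norm_sub_le_of_forall_ball_inter_nonempty (S := {q | ∃ n : ℤ, Odd n ∧ cosh q = n}) hg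
      (fun w hw ⟨n, hn, hwn⟩ => hodd w hw n hn (by rw [← hge w hw, hwn]))
      (fun w => (exists_mem_ball_cosh_eq_odd w).imp fun _ hq => hq.symm) hz
  calc ‖f z‖ = ‖cosh (g z)‖ := by rw [hge z hzr]
    _ ≤ Real.exp ‖g z‖ := norm_cosh_le_exp_norm _
    _ ≤ Real.exp (2 * ‖f c‖ + 437) := by
        gcongr
        linarith [norm_le_norm_add_norm_sub' (g z) (g c), Real.pi_lt_four]

lemma norm_le_exp_exp_of_ne_zero_of_ne_one {R : ℝ} (hf : DifferentiableOn ℂ f (ball c r))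
    (h0 : ∀ w ∈ ball c r, f w ≠ 0) (h1 : ∀ w ∈ ball c r, f w ≠ 1) (hR : ‖f c‖ ≤ R)
    (hR' : ‖(f c)⁻¹‖ ≤ R) (hz : z ∈ ball c (r / 2)) :
    ‖f z‖ ≤ Real.exp (Real.pi * (Real.exp (2 * R + 441) + 1)) := by
  have hr : 0 < r / 2 := pos_of_mem_ball hz
  have hc : c ∈ ball c r := mem_ball_self (by linarith)
  have hzr : z ∈ ball c r := ball_subset_ball (by linarith) hz
  obtain ⟨g, hg, hgc, hge⟩ :=
    exists_differentiableOn_exp_pi_mul_I_eq (isSimplyConnected_ball hc) isOpen_ball hf h0 hc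
  have hodd : ∀ w ∈ ball c r, ∀ n : ℤ, Odd n → g w ≠ n := by
    rintro w hw _ ⟨m, rfl⟩ hgw
    refine h1 w hw ?_
    rw [← hge w hw, hgw, exp_eq_one_iff]
    exact ⟨m + 1, by push_cast; ring⟩
  have hgc' : ‖g c‖ ≤ R + 2 := by
    have hlog : ‖log (f c)‖ / Real.pi ≤ R + 1 := by
      rw [div_le_iff₀ Real.pi_pos]
      nlinarith [norm_log_le_add_pi (h0 c hc) hR hR', Real.pi_gt_three, (norm_nonneg _).trans hR]
    linarith
  have hgz : ‖g z + 1‖ ≤ Real.exp (2 * R + 441) + 1 := calc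
    ‖g z + 1‖ ≤ ‖g z‖ + 1 := (norm_add_le _ _).trans_eq (by rw [norm_one])
    _ ≤ Real.exp (2 * ‖g c‖ + 437) + 1 := by
        gcongr
        exact norm_le_exp_of_ne_odd hg hodd hz
    _ ≤ Real.exp (2 * R + 441) + 1 := by
        linarith [Real.exp_le_exp.2 (by linarith : 2 * ‖g c‖ + 437 ≤ 2 * R + 441)]
  calc ‖f z‖ ≤ Real.exp ‖Real.pi * I * (g z + 1)‖ := by
        rw [← hge z hzr]
        exact norm_exp_le_exp_norm _
    _ ≤ Real.exp (Real.pi * (Real.exp (2 * R + 441) + 1)) := by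
        rw [norm_mul, norm_pi_mul_I]
        gcongr

/-- The bound furnished by Schottky's theorem at half the radius, for holomorphic functions that
omit `0` and `1` and have modulus at most `R` at the centre. The value is far from optimal. -/
noncomputable def schottkyBound (R : ℝ) : ℝ :=
  Real.exp (Real.pi * (Real.exp (2 * R + 445) + 1)) + 1

lemma schottkyBound_mono : Monotone schottkyBound := by
  intro R R' h
  unfold schottkyBound
  gcongr

lemma norm_le_schottkyBound (hf : DifferentiableOn ℂ f (ball c r))
    (h0 : ∀ w ∈ ball c r, f w ≠ 0) (h1 : ∀ w ∈ ball c r, f w ≠ 1) (hz : z ∈ ball c (r / 2)) :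
    ‖f z‖ ≤ schottkyBound ‖f c‖ := by
  have hinv : ∀ w : ℂ, 1 / 2 ≤ ‖w‖ → ‖w⁻¹‖ ≤ ‖f c‖ + 2 := by
    intro w hw
    have : ‖w‖⁻¹ ≤ (1 / 2)⁻¹ := inv_anti₀ (by norm_num) hw
    rw [norm_inv]
    linarith [norm_nonneg (f c)]
  have hrad : 2 * (‖f c‖ + 2) + 441 = 2 * ‖f c‖ + 445 := by ring
  unfold schottkyBound
  rw [← hrad]
  rcases le_total (1 / 2) ‖f c‖ with hc | hc
  · have hfz := norm_le_exp_exp_of_ne_zero_of_ne_one hf h0 h1 (by linarith) (hinv _ hc) hz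
    linarith
  · have hone : ‖(1 : ℂ)‖ = 1 := norm_one
    have hfz := norm_le_exp_exp_of_ne_zero_of_ne_one (R := ‖f c‖ + 2) (hf.const_sub 1)
      (fun w hw => sub_ne_zero.2 (h1 w hw).symm) (fun w hw => by simpa using h0 w hw)
      (by linarith [norm_sub_le 1 (f c)]) (hinv _ (by linarith [norm_sub_norm_le 1 (f c)])) hz
    linarith [norm_sub_norm_le (f z) 1, norm_sub_rev (f z) 1]

end Schottky

section Harnack

lemma norm_pow_three_le_of_norm_lt {h : ℂ → ℂ} {c z : ℂ} {r M : ℝ}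
    (hh : DifferentiableOn ℂ h (ball c r)) (h0 : ∀ w ∈ ball c r, h w ≠ 0)
    (hM : ∀ w ∈ ball c r, ‖h w‖ < M) (hz : z ∈ ball c (r / 4)) :
    ‖h z‖ ^ 3 ≤ M ^ 2 * ‖h c‖ := by
  have hr : 0 < r / 4 := pos_of_mem_ball hz
  have hc : c ∈ ball c r := mem_ball_self (by linarith)
  have hzr : z ∈ ball c r := ball_subset_ball (by linarith) hz
  have hM0 : 0 < M := (norm_nonneg _).trans_lt (hM c hc)
  obtain ⟨g, hg, -, hge⟩ :=
    exists_differentiableOn_exp_eq (isSimplyConnected_ball hc) isOpen_ball hh h0 hc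
  have hnorm : ∀ w ∈ ball c r, ‖h w‖ = Real.exp (g w).re := fun w hw => by
    rw [← hge w hw, norm_exp]
  have hre : ∀ w ∈ ball c r, (g w).re < Real.log M := fun w hw => by
    rw [Real.lt_log_iff_exp_lt hM0, ← hnorm w hw]
    exact hM w hw
  set B : ℝ := Real.log M - (g c).re with hB
  have hmaps : MapsTo (fun w => c + w) (ball 0 r) (ball c r) := fun w hw => by simpa using hw
  have hcar : ‖g z - g c‖ ≤ 2 * B * ‖z - c‖ / (r - ‖z - c‖) := by
    simpa using borelCaratheodory_zero (f := fun w => g (c + w) - g c) (M := B) (z := z - c)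
      (by linarith [hre c hc]) ((hg.comp (by fun_prop) hmaps).sub_const _)
      (fun w hw => by simpa [hB] using (hre _ (hmaps hw)).le) (by linarith)
      (by simpa [dist_eq_norm] using hzr) (by simp)
  have hzc : ‖z - c‖ < r / 4 := mem_ball_iff_norm.1 hz
  have hthird : (g z).re - (g c).re ≤ 2 / 3 * B := by
    refine (sub_re _ _ ▸ re_le_norm _).trans (hcar.trans ?_)
    rw [div_le_iff₀ (by linarith)]
    nlinarith [norm_nonneg (z - c), hre c hc]
  calc ‖h z‖ ^ 3 = Real.exp (3 * (g z).re) := by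
        rw [hnorm z hzr, ← Real.exp_nat_mul, Nat.cast_ofNat]
    _ ≤ Real.exp (2 * Real.log M + (g c).re) := by gcongr; linarith
    _ = M ^ 2 * ‖h c‖ := by
        rw [Real.exp_add, hnorm c hc, two_mul, Real.exp_add, Real.exp_log hM0, sq]

end Harnack

section HolomorphicFamily

variable {ι : Type*} {X : Set ι} {φ : ℂ → ι → ℂ} {c : ℂ} {r : ℝ}

lemma norm_le_schottkyBound_crossRatio {u a b : ℂ → ℂ} {z : ℂ}
    (hu : DifferentiableOn ℂ u (ball c r)) (ha : DifferentiableOn ℂ a (ball c r))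
    (hb : DifferentiableOn ℂ b (ball c r)) (hba : ∀ w ∈ ball c r, b w ≠ a w)
    (hua : ∀ w ∈ ball c r, u w ≠ a w) (hub : ∀ w ∈ ball c r, u w ≠ b w)
    (hz : z ∈ ball c (r / 2)) :
    ‖u z‖ ≤ schottkyBound (‖u c - a c‖ / ‖b c - a c‖) * ‖b z - a z‖ + ‖a z‖ := by
  have hr : 0 < r / 2 := pos_of_mem_ball hz
  have hzr : z ∈ ball c r := ball_subset_ball (by linarith) hz
  have hne : ∀ w ∈ ball c r, b w - a w ≠ 0 := fun w hw => sub_ne_zero.2 (hba w hw)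
  have hbound : ‖(u z - a z) / (b z - a z)‖ ≤ schottkyBound ‖(u c - a c) / (b c - a c)‖ :=
    norm_le_schottkyBound (f := fun w => (u w - a w) / (b w - a w))
      ((hu.sub ha).div (hb.sub ha) hne)
      (fun w hw => div_ne_zero (sub_ne_zero.2 (hua w hw)) (hne w hw))
      (fun w hw h => hub w hw (sub_left_injective ((div_eq_one_iff_eq (hne w hw)).1 h))) hz
  rw [norm_div, norm_div, div_le_iff₀ (norm_pos_iff.2 (hne z hzr))] at hbound
  linarith [norm_sub_norm_le (u z) (a z)]

lemma exists_forall_norm_le_of_continuousOn_ball {f : ℂ → ℂ} (hr : 0 < r)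
    (hf : ContinuousOn f (ball c r)) : ∃ C, ∀ z ∈ ball c (r / 2), ‖f z‖ ≤ C := by
  obtain ⟨C, hC⟩ := (isCompact_closedBall c (r / 2)).exists_bound_of_continuousOn
    (hf.mono (closedBall_subset_ball (by linarith)))
  exact ⟨C, fun z hz => hC z (ball_subset_closedBall hz)⟩

lemma exists_forall_norm_le_of_injOn (hd : ∀ i ∈ X, DifferentiableOn ℂ (fun μ => φ μ i) (ball c r))
    (hinj : ∀ μ ∈ ball c r, InjOn (φ μ) X) (hr : 0 < r) (R : ℝ) :
    ∃ C, ∀ i ∈ X, ‖φ c i‖ ≤ R → ∀ μ ∈ ball c (r / 2), ‖φ μ i‖ ≤ C := by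
  rcases X.subsingleton_or_nontrivial with hX | ⟨a, ha, b, hb, hab⟩
  · rcases hX.eq_empty_or_singleton with rfl | ⟨a, rfl⟩
    · simp
    · obtain ⟨C, hC⟩ := exists_forall_norm_le_of_continuousOn_ball hr (hd a rfl).continuousOn
      exact ⟨C, by rintro i rfl -; exact hC⟩
  obtain ⟨A, hA⟩ := exists_forall_norm_le_of_continuousOn_ball hr (hd a ha).continuousOn
  obtain ⟨B, hB⟩ := exists_forall_norm_le_of_continuousOn_ball hr (hd b hb).continuousOn
  have hc : c ∈ ball c (r / 2) := mem_ball_self (by linarith)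
  have hA0 : 0 ≤ A := (norm_nonneg _).trans (hA c hc)
  have hB0 : 0 ≤ B := (norm_nonneg _).trans (hB c hc)
  have hne : ∀ i ∈ X, ∀ j ∈ X, i ≠ j → ∀ μ ∈ ball c r, φ μ i ≠ φ μ j :=
    fun i hi j hj hij μ hμ => (hinj μ hμ).ne hi hj hij
  set S : ℝ := schottkyBound ((R + A) / ‖φ c b - φ c a‖)
  have hS0 : 0 ≤ S := by simp only [S, schottkyBound]; positivity
  refine ⟨S * (B + A) + (B + A), fun i hi hiR μ hμ => ?_⟩
  have hSBA : 0 ≤ S * (B + A) := by positivity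
  rcases eq_or_ne i a with rfl | hia
  · linarith [hA μ hμ]
  rcases eq_or_ne i b with rfl | hib
  · linarith [hB μ hμ]
  calc ‖φ μ i‖ ≤ schottkyBound (‖φ c i - φ c a‖ / ‖φ c b - φ c a‖) * ‖φ μ b - φ μ a‖ + ‖φ μ a‖ :=
        norm_le_schottkyBound_crossRatio (u := fun w => φ w i) (a := fun w => φ w a)
          (b := fun w => φ w b) (hd i hi) (hd a ha) (hd b hb) (hne b hb a ha hab.symm)
          (hne i hi a ha hia) (hne i hi b hb hib) hμ
    _ ≤ S * (B + A) + (B + A) := by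
        refine add_le_add (mul_le_mul (schottkyBound_mono ?_) ?_ (norm_nonneg _) hS0) ?_
        · gcongr
          exact (norm_sub_le _ _).trans (add_le_add hiR (hA c hc))
        · exact (norm_sub_le _ _).trans (add_le_add (hB μ hμ) (hA μ hμ))
        · linarith [hA μ hμ]

lemma exists_forall_norm_sub_pow_three_le
    (hd : ∀ i ∈ X, DifferentiableOn ℂ (fun μ => φ μ i) (ball c r))
    (hinj : ∀ μ ∈ ball c r, InjOn (φ μ) X) (hr : 0 < r) (R : ℝ) :
    ∃ K, ∀ i ∈ X, ∀ j ∈ X, ‖φ c i‖ ≤ R → ‖φ c j‖ ≤ R → ∀ μ ∈ ball c (r / 8),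
      ‖φ μ i - φ μ j‖ ^ 3 ≤ K * ‖φ c i - φ c j‖ := by
  obtain ⟨C, hC⟩ := exists_forall_norm_le_of_injOn hd hinj hr R
  refine ⟨(2 * C + 1) ^ 2, fun i hi j hj hiR hjR μ hμ => ?_⟩
  rcases eq_or_ne i j with rfl | hij
  · simp
  have hsub : ball c (r / 2) ⊆ ball c r := ball_subset_ball (by linarith)
  refine norm_pow_three_le_of_norm_lt (h := fun w => φ w i - φ w j) (r := r / 2)
    (((hd i hi).sub (hd j hj)).mono hsub)
    (fun w hw => sub_ne_zero.2 ((hinj w (hsub hw)).ne hi hj hij)) (fun w hw => ?_)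
    (by convert hμ using 2; ring)
  linarith [norm_sub_le (φ w i) (φ w j), hC i hi hiR w hw, hC j hj hjR w hw]

variable {F : Filter ι}

lemma uniformCauchySeqOn_of_tendsto
    (hd : ∀ i ∈ X, DifferentiableOn ℂ (fun μ => φ μ i) (ball c r))
    (hinj : ∀ μ ∈ ball c r, InjOn (φ μ) X) (hr : 0 < r) (hFX : ∀ᶠ i in F, i ∈ X) {y : ℂ}
    (hF : Tendsto (φ c) F (𝓝 y)) :
    UniformCauchySeqOn (fun i μ => φ μ i) F (ball c (r / 8)) := by
  intro s hs
  obtain ⟨ε, hε, hεs⟩ := Metric.mem_uniformity_dist.1 hs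
  obtain ⟨K, hK⟩ := exists_forall_norm_sub_pow_three_le hd hinj hr (‖y‖ + 1)
  have hbdd : ∀ᶠ i in F, i ∈ X ∧ ‖φ c i‖ ≤ ‖y‖ + 1 :=
    hFX.and (hF.norm.eventually_le_const (lt_add_one _))
  have hzero : Tendsto (fun p : ι × ι => K * ‖φ c p.1 - φ c p.2‖) (F ×ˢ F) (𝓝 0) := by
    simpa using (((hF.comp tendsto_fst).sub (hF.comp tendsto_snd)).norm.const_mul K)
  filter_upwards [hbdd.prod_mk hbdd, hzero.eventually_lt_const (by positivity : 0 < ε ^ 3)]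
    with ⟨i, j⟩ ⟨⟨hi, hiR⟩, hj, hjR⟩ hlt μ hμ
  refine hεs ?_
  rw [dist_eq_norm]
  exact lt_of_pow_lt_pow_left₀ 3 hε.le ((hK i hi j hj hiR hjR μ hμ).trans_lt hlt)

lemma exists_tendsto_of_tendsto_of_mem_ball [F.NeBot]
    (hd : ∀ i ∈ X, DifferentiableOn ℂ (fun μ => φ μ i) (ball c r))
    (hinj : ∀ μ ∈ ball c r, InjOn (φ μ) X) (hFX : ∀ᶠ i in F, i ∈ X)
    (hF : ∃ y, Tendsto (φ c) F (𝓝 y)) {m : ℂ} (hm : m ∈ ball c (r / 8)) :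
    ∃ y, Tendsto (φ m) F (𝓝 y) := by
  obtain ⟨y, hy⟩ := hF
  have hr : 0 < r / 8 := pos_of_mem_ball hm
  exact cauchy_map_iff_exists_tendsto.1
    ((uniformCauchySeqOn_of_tendsto hd hinj (by linarith) hFX hy).cauchy_map hm)

lemma exists_tendsto_of_exists_tendsto [F.NeBot] {U : Set ℂ} (hUo : IsOpen U)
    (hUc : IsPreconnected U) (hd : ∀ i ∈ X, DifferentiableOn ℂ (fun μ => φ μ i) U)
    (hinj : ∀ μ ∈ U, InjOn (φ μ) X) (hFX : ∀ᶠ i in F, i ∈ X) {l m : ℂ} (hl : l ∈ U)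
    (hm : m ∈ U) (hF : ∃ y, Tendsto (φ l) F (𝓝 y)) : ∃ y, Tendsto (φ m) F (𝓝 y) := by
  have hstep : ∀ c r, ball c r ⊆ U → ∀ μ ∈ ball c (r / 8),
      (∃ y, Tendsto (φ c) F (𝓝 y)) → ∃ y, Tendsto (φ μ) F (𝓝 y) := fun c r hsub μ hμ h =>
    exists_tendsto_of_tendsto_of_mem_ball (fun i hi => (hd i hi).mono hsub)
      (fun w hw => hinj w (hsub hw)) hFX h hμ
  refine hUc.induction₂' (fun l m => (∃ y, Tendsto (φ l) F (𝓝 y)) → ∃ y, Tendsto (φ m) F (𝓝 y))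
    (fun c hc => ?_) (fun _ _ _ _ _ _ hlm hmn h => hmn (hlm h)) hl hm hF
  obtain ⟨r, hr, hsub⟩ := Metric.isOpen_iff.1 hUo c hc
  filter_upwards [mem_nhdsWithin_of_mem_nhds (ball_mem_nhds c (by positivity : 0 < r / 16))]
    with μ hμ
  rw [mem_ball] at hμ
  refine ⟨hstep c r hsub μ (mem_ball.2 (by linarith)), hstep μ (r / 2) ?_ c ?_⟩
  · exact (ball_subset_ball' (by linarith)).trans hsub
  · rw [mem_ball']
    linarith

end HolomorphicFamily

namespace IsHolomorphicMotion

variable {Λ : Set ℂ} {l₀ : ℂ} {X : Set ℂ} {φ : ℂ → ℂ → ℂ}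

lemma tendsto_nhdsWithin_center (hφ : IsHolomorphicMotion Λ l₀ X φ) (z : ℂ) :
    Tendsto (φ l₀) (𝓝[X] z) (𝓝 z) :=
  (tendsto_id.mono_left nhdsWithin_le_nhds).congr'
    (eventually_nhdsWithin_of_forall fun w hw => (hφ.2.2 w hw).symm)

lemma tendsto_extendFrom (hφ : IsHolomorphicMotion Λ l₀ X φ) (hΛo : IsOpen Λ)
    (hΛc : IsPreconnected Λ) (hl₀ : l₀ ∈ Λ) {l : ℂ} (hl : l ∈ Λ) {z : ℂ} (hz : z ∈ closure X) :
    Tendsto (φ l) (𝓝[X] z) (𝓝 (extendFrom X (φ l) z)) := by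
  have := mem_closure_iff_nhdsWithin_neBot.1 hz
  exact _root_.tendsto_extendFrom (exists_tendsto_of_exists_tendsto hΛo hΛc hφ.1 hφ.2.1
    eventually_mem_nhdsWithin hl₀ hl ⟨z, hφ.tendsto_nhdsWithin_center z⟩)

lemma continuousOn_extendFrom (hφ : IsHolomorphicMotion Λ l₀ X φ) (hΛo : IsOpen Λ)
    (hΛc : IsPreconnected Λ) (hl₀ : l₀ ∈ Λ) {l : ℂ} (hl : l ∈ Λ) :
    ContinuousOn (extendFrom X (φ l)) (closure X) :=
  _root_.continuousOn_extendFrom subset_rfl fun _ hz =>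
    ⟨_, hφ.tendsto_extendFrom hΛo hΛc hl₀ hl hz⟩

lemma extendFrom_eq (hφ : IsHolomorphicMotion Λ l₀ X φ) (hΛo : IsOpen Λ)
    (hΛc : IsPreconnected Λ) (hl₀ : l₀ ∈ Λ) {l : ℂ} (hl : l ∈ Λ) {z : ℂ} (hz : z ∈ X) :
    extendFrom X (φ l) z = φ l z :=
  tendsto_nhds_unique
    ((hφ.tendsto_extendFrom hΛo hΛc hl₀ hl (subset_closure hz)).mono_left (pure_le_nhdsWithin hz))
    (tendsto_pure_nhds _ _)

lemma continuousOn (hφ : IsHolomorphicMotion Λ l₀ X φ) (hΛo : IsOpen Λ)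
    (hΛc : IsPreconnected Λ) (hl₀ : l₀ ∈ Λ) {l : ℂ} (hl : l ∈ Λ) : ContinuousOn (φ l) X :=
  ((hφ.continuousOn_extendFrom hΛo hΛc hl₀ hl).mono subset_closure).congr fun _ hz =>
    (hφ.extendFrom_eq hΛo hΛc hl₀ hl hz).symm

lemma differentiableOn_extendFrom (hφ : IsHolomorphicMotion Λ l₀ X φ) (hΛo : IsOpen Λ)
    (hΛc : IsPreconnected Λ) (hl₀ : l₀ ∈ Λ) {z : ℂ} (hz : z ∈ closure X) :
    DifferentiableOn ℂ (fun l => extendFrom X (φ l) z) Λ := by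
  intro c hc
  have := mem_closure_iff_nhdsWithin_neBot.1 hz
  obtain ⟨r, hr, hsub⟩ := Metric.isOpen_iff.1 hΛo c hc
  have hsub' : ball c (r / 8) ⊆ Λ := (ball_subset_ball (by linarith)).trans hsub
  have hunif : TendstoUniformlyOn (fun w l => φ l w) (fun l => extendFrom X (φ l) z) (𝓝[X] z)
      (ball c (r / 8)) :=
    (uniformCauchySeqOn_of_tendsto (fun w hw => (hφ.1 w hw).mono hsub)
      (fun l hl => hφ.2.1 l (hsub hl)) hr eventually_mem_nhdsWithin
      (hφ.tendsto_extendFrom hΛo hΛc hl₀ hc hz)).tendstoUniformlyOn_of_tendsto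
      fun l hl => hφ.tendsto_extendFrom hΛo hΛc hl₀ (hsub' hl) hz
  have hball : DifferentiableOn ℂ (fun l => extendFrom X (φ l) z) (ball c (r / 8)) :=
    hunif.tendstoLocallyUniformlyOn.differentiableOn
      (eventually_nhdsWithin_of_forall fun w hw => (hφ.1 w hw).mono hsub') isOpen_ball
  exact (hball.differentiableAt (ball_mem_nhds c (by positivity))).differentiableWithinAt

lemma injOn_extendFrom (hφ : IsHolomorphicMotion Λ l₀ X φ) (hΛo : IsOpen Λ)
    (hΛc : IsPreconnected Λ) (hl₀ : l₀ ∈ Λ) {l : ℂ} (hl : l ∈ Λ) :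
    InjOn (extendFrom X (φ l)) (closure X) := by
  intro z hz w hw hzw
  have := mem_closure_iff_nhdsWithin_neBot.1 hz
  have := mem_closure_iff_nhdsWithin_neBot.1 hw
  have hlim : Tendsto (φ l) (𝓝[X] z ⊔ 𝓝[X] w) (𝓝 (extendFrom X (φ l) z)) :=
    (hφ.tendsto_extendFrom hΛo hΛc hl₀ hl hz).sup
      (hzw ▸ hφ.tendsto_extendFrom hΛo hΛc hl₀ hl hw)
  obtain ⟨y, hy⟩ := exists_tendsto_of_exists_tendsto hΛo hΛc hφ.1 hφ.2.1
    (eventually_sup.2 ⟨eventually_mem_nhdsWithin, eventually_mem_nhdsWithin⟩) hl hl₀ ⟨_, hlim⟩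
  obtain ⟨hyz, hyw⟩ := tendsto_sup.1 hy
  exact (tendsto_nhds_unique (hφ.tendsto_nhdsWithin_center z) hyz).trans
    (tendsto_nhds_unique hyw (hφ.tendsto_nhdsWithin_center w))

protected lemma extendFrom (hφ : IsHolomorphicMotion Λ l₀ X φ) (hΛo : IsOpen Λ)
    (hΛc : IsPreconnected Λ) (hl₀ : l₀ ∈ Λ) :
    IsHolomorphicMotion Λ l₀ (closure X) fun l => extendFrom X (φ l) := by
  refine ⟨fun z hz => hφ.differentiableOn_extendFrom hΛo hΛc hl₀ hz,
    fun l hl => hφ.injOn_extendFrom hΛo hΛc hl₀ hl, fun z hz => ?_⟩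
  have := mem_closure_iff_nhdsWithin_neBot.1 hz
  exact tendsto_nhds_unique (hφ.tendsto_extendFrom hΛo hΛc hl₀ hl₀ hz)
    (hφ.tendsto_nhdsWithin_center z)

lemma eqOn_closure {ψ ψ' : ℂ → ℂ → ℂ} (hψ : IsHolomorphicMotion Λ l₀ (closure X) ψ)
    (hψ' : IsHolomorphicMotion Λ l₀ (closure X) ψ') (hΛo : IsOpen Λ) (hΛc : IsPreconnected Λ)
    (hl₀ : l₀ ∈ Λ) {l : ℂ} (hl : l ∈ Λ) (h : EqOn (ψ l) (ψ' l) X) :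
    EqOn (ψ l) (ψ' l) (closure X) :=
  h.of_subset_closure (hψ.continuousOn hΛo hΛc hl₀ hl) (hψ'.continuousOn hΛo hΛc hl₀ hl)
    subset_closure subset_rfl

end IsHolomorphicMotion

theorem holomorphicMotion_extends_to_closure_general {Λ : Set ℂ} (hΛo : IsOpen Λ)
    (hΛc : IsPreconnected Λ) {l₀ : ℂ} (hl₀ : l₀ ∈ Λ) {X : Set ℂ} {φ : ℂ → ℂ → ℂ}
    (hφ : IsHolomorphicMotion Λ l₀ X φ) :
    ∃ ψ : ℂ → ℂ → ℂ,
      ((∀ l ∈ Λ, EqOn (ψ l) (φ l) X) ∧ IsHolomorphicMotion Λ l₀ (closure X) ψ ∧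
        ∀ l ∈ Λ, ContinuousOn (ψ l) (closure X)) ∧
      ∀ ψ' : ℂ → ℂ → ℂ, (∀ l ∈ Λ, EqOn (ψ' l) (φ l) X) →
        IsHolomorphicMotion Λ l₀ (closure X) ψ' → ∀ l ∈ Λ, EqOn (ψ' l) (ψ l) (closure X) := by
  have hψ := hφ.extendFrom hΛo hΛc hl₀
  have hext : ∀ l ∈ Λ, EqOn (extendFrom X (φ l)) (φ l) X := fun l hl z hz =>
    hφ.extendFrom_eq hΛo hΛc hl₀ hl hz
  exact ⟨fun l => extendFrom X (φ l),
    ⟨hext, hψ, fun l hl => hφ.continuousOn_extendFrom hΛo hΛc hl₀ hl⟩,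
    fun ψ' hψ'φ hψ' l hl => hψ'.eqOn_closure hψ hΛo hΛc hl₀ hl ((hψ'φ l hl).trans (hext l hl).symm)⟩

/-- λ-lemma (extension part): a holomorphic motion of `X` over a connected open set `Λ`
extends uniquely to a holomorphic motion of the closure of `X`, and for each parameter
the extended map is continuous and injective on the closure of `X`. -/
theorem holomorphicMotion_extends_to_closure (Λ : Set ℂ) (hΛo : IsOpen Λ)
    (hΛc : IsConnected Λ) (l₀ : ℂ) (hl₀ : l₀ ∈ Λ) (X : Set ℂ) (φ : ℂ → ℂ → ℂ)
    (hφ : IsHolomorphicMotion Λ l₀ X φ) :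
    ∃ ψ : ℂ → ℂ → ℂ,
      ((∀ l ∈ Λ, ∀ z ∈ X, ψ l z = φ l z) ∧
        IsHolomorphicMotion Λ l₀ (closure X) ψ ∧
        ∀ l ∈ Λ, ContinuousOn (ψ l) (closure X) ∧ Set.InjOn (ψ l) (closure X)) ∧
      ∀ ψ' : ℂ → ℂ → ℂ,
        ((∀ l ∈ Λ, ∀ z ∈ X, ψ' l z = φ l z) ∧
          IsHolomorphicMotion Λ l₀ (closure X) ψ' ∧
          ∀ l ∈ Λ, ContinuousOn (ψ' l) (closure X) ∧ Set.InjOn (ψ' l) (closure X)) →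
        ∀ l ∈ Λ, ∀ z ∈ closure X, ψ' l z = ψ l z := by
  obtain ⟨ψ, ⟨hext, hψ, hcont⟩, huniq⟩ :=
    holomorphicMotion_extends_to_closure_general hΛo hΛc.isPreconnected hl₀ hφ
  exact ⟨ψ, ⟨hext, hψ, fun l hl => ⟨hcont l hl, hψ.2.1 l hl⟩⟩,
    fun ψ' h => huniq ψ' h.1 h.2.1⟩
end

section
/- Let X ⊂ ℂ be a compact, connected, full set with more than one point, and let φ : ℂ \ 𝔻̄ → ℂ \ X be a conformal isomorphism. Then φ extends continuously to the closed complement of the open unit disk if and only if the boundary of X is locally connected. -/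
/-!
The map `φ` fixes infinity, in the sense that it preserves the filter `cobounded ℂ`: otherwise the
point at infinity would be sent to an isolated point of `X`. An extension `Φ` of `φ` is therefore
proper and maps the unit circle onto `∂X`, and Hausdorff continuous images of compact locally
connected spaces are locally connected.

Conversely, let `ζ` lie on the unit circle. Since the images of bounded sets have finite area, the
Cauchy–Schwarz inequality in polar coordinates around `ζ` yields arbitrarily small radii `ρ` for
which the image of the crosscut `{|z| > 1, |z - ζ| = ρ}` is small and close to a fixed point
`a ∈ ∂X`. Local connectivity provides a small connected `N ⊆ ∂X` which is a neighbourhood of `a` in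
`∂X`. The region `U = φ {|z| > 1, |z - ζ| < ρ}` has its boundary in `A ∪ ∂X`, where `A` is the union
of a small disk and the closure of `N`. For `p ∈ U` far from `a` and `q ∉ U ∪ X` far from `a`, the
function `(z - p) / (z - q)` has a continuous logarithm on `A`, because a circle around `A` leaves
`p` and `q` on the same side, and on `∂X`, because `ℂ \ X` is connected. As `A ∩ ∂X` is connected
these glue to a logarithm on `∂U`, which is impossible as `U` contains `p` but not `q`. Hence `U`
stays near `a`, so `φ z → a` as `z → ζ`.
-/

open Bornology Complex Filter MeasureTheory Metric Set Topology
open scoped ENNReal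

/-! ### Continuous logarithms and separation of the plane -/

theorem exists_eq_add_of_exp_eq {α : Type*} [TopologicalSpace α] {f g : α → ℂ} {s : Set α}
    (hs : IsPreconnected s) (hf : ContinuousOn f s) (hg : ContinuousOn g s)
    (hfg : ∀ z ∈ s, exp (f z) = exp (g z)) :
    ∃ c : ℂ, exp c = 1 ∧ ∀ z ∈ s, f z = g z + c := by
  rcases s.eq_empty_or_nonempty with rfl | ⟨a, ha⟩
  · exact ⟨0, exp_zero, by simp⟩
  have hc : exp (f a - g a) = 1 := by rw [exp_sub, hfg a ha, div_self (exp_ne_zero _)]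
  refine ⟨f a - g a, hc, isCoveringMap_exp.eqOn_of_comp_eqOn hs hf
    (hg.add continuousOn_const) (fun z hz ↦ ?_) ha (by ring)⟩
  simp only [Function.comp_apply, exp_add, hc, mul_one, hfg z hz]

/-- `f` has a continuous branch of the logarithm on `s`; in particular it does not vanish there. -/
def HasContinuousLogOn {α : Type*} [TopologicalSpace α] (f : α → ℂ) (s : Set α) : Prop :=
  ∃ h : α → ℂ, ContinuousOn h s ∧ ∀ z ∈ s, exp (h z) = f z

namespace HasContinuousLogOn

variable {α : Type*} [TopologicalSpace α] {f g : α → ℂ} {s t : Set α}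

theorem ne_zero (hf : HasContinuousLogOn f s) {z : α} (hz : z ∈ s) : f z ≠ 0 := by
  obtain ⟨h, -, hh⟩ := hf
  exact hh z hz ▸ exp_ne_zero _

theorem mono (hf : HasContinuousLogOn f t) (hst : s ⊆ t) : HasContinuousLogOn f s := by
  obtain ⟨h, hc, hh⟩ := hf
  exact ⟨h, hc.mono hst, fun z hz ↦ hh z (hst hz)⟩

theorem congr (hf : HasContinuousLogOn f s) (hfg : EqOn g f s) : HasContinuousLogOn g s := by
  obtain ⟨h, hc, hh⟩ := hf
  exact ⟨h, hc, fun z hz ↦ (hh z hz).trans (hfg hz).symm⟩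

theorem mul (hf : HasContinuousLogOn f s) (hg : HasContinuousLogOn g s) :
    HasContinuousLogOn (fun z ↦ f z * g z) s := by
  obtain ⟨h, hc, hh⟩ := hf
  obtain ⟨k, kc, hk⟩ := hg
  exact ⟨fun z ↦ h z + k z, hc.add kc, fun z hz ↦ by rw [exp_add, hh z hz, hk z hz]⟩

theorem div (hf : HasContinuousLogOn f s) (hg : HasContinuousLogOn g s) :
    HasContinuousLogOn (fun z ↦ f z / g z) s := by
  obtain ⟨h, hc, hh⟩ := hf
  obtain ⟨k, kc, hk⟩ := hg
  exact ⟨fun z ↦ h z - k z, hc.sub kc, fun z hz ↦ by rw [exp_sub, hh z hz, hk z hz]⟩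

theorem inv (hf : HasContinuousLogOn f s) : HasContinuousLogOn (fun z ↦ (f z)⁻¹) s := by
  obtain ⟨h, hc, hh⟩ := hf
  exact ⟨fun z ↦ -h z, hc.neg, fun z hz ↦ by rw [exp_neg, hh z hz]⟩

theorem of_mapsTo_slitPlane (hf : ContinuousOn f s) (hs : MapsTo f s slitPlane) :
    HasContinuousLogOn f s :=
  ⟨fun z ↦ log (f z), hf.clog hs, fun _ hz ↦ exp_log (slitPlane_ne_zero (hs hz))⟩

-- The two branches differ by a constant in `2πiℤ` on the connected intersection.
theorem union (hs : IsClosed s) (ht : IsClosed t) (hst : IsPreconnected (s ∩ t))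
    (hfs : HasContinuousLogOn f s) (hft : HasContinuousLogOn f t) :
    HasContinuousLogOn f (s ∪ t) := by
  classical
  obtain ⟨h, hc, hh⟩ := hfs
  obtain ⟨k, kc, hk⟩ := hft
  obtain ⟨c, hc1, hhk⟩ := exists_eq_add_of_exp_eq hst (hc.mono inter_subset_left)
    (kc.mono inter_subset_right) fun z hz ↦ (hh z hz.1).trans (hk z hz.2).symm
  have hs_eq : EqOn (s.piecewise h fun z ↦ k z + c) h s := piecewise_eqOn _ _ _
  have ht_eq : EqOn (s.piecewise h fun z ↦ k z + c) (fun z ↦ k z + c) t := by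
    intro z hz
    by_cases hzs : z ∈ s
    · rw [hs_eq hzs, hhk z ⟨hzs, hz⟩]
    · exact piecewise_eq_of_notMem _ _ _ hzs
  refine ⟨s.piecewise h fun z ↦ k z + c, (hc.congr hs_eq).union_of_isClosed
    ((kc.add continuousOn_const).congr ht_eq) hs ht, ?_⟩
  rintro z (hz | hz)
  · rw [hs_eq hz, hh z hz]
  · rw [ht_eq hz, exp_add, hc1, mul_one, hk z hz]

theorem univ_of_ne_zero {f : ℂ → ℂ} (hf : Continuous f) (h0 : ∀ z, f z ≠ 0) :
    HasContinuousLogOn f univ := by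
  obtain ⟨h, ⟨-, hh⟩, -⟩ := isCoveringMapOn_exp.existsUnique_continuousMap_lifts
    ⟨f, hf⟩ (exp_log (h0 0)) h0
  exact ⟨h, h.continuous.continuousOn, fun z _ ↦ congrFun hh z⟩

end HasContinuousLogOn

theorem not_hasContinuousLogOn_sub_center (c : ℂ) {r : ℝ} (hr : 0 < r) :
    ¬ HasContinuousLogOn (fun z ↦ z - c) (sphere c r) := by
  rintro ⟨h, hc, hh⟩
  have hmem : ∀ θ ∈ univ, circleMap c r θ ∈ sphere c r := fun θ _ ↦
    circleMap_mem_sphere c hr.le θ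
  obtain ⟨k, -, hk⟩ := exists_eq_add_of_exp_eq isPreconnected_univ
    (hc.comp (continuous_circleMap c r).continuousOn hmem)
    (by fun_prop : ContinuousOn (fun θ : ℝ ↦ (Real.log r + θ * I : ℂ)) univ) fun θ hθ ↦ by
      simp only [Function.comp_apply, hh _ (hmem θ hθ), circleMap_sub_center, exp_add,
        ← ofReal_exp, Real.exp_log hr, circleMap_zero]
  have h0 := hk 0 trivial
  have h2π := hk (2 * Real.pi) trivial
  rw [Function.comp_apply, (periodic_circleMap c r).eq, ← Function.comp_apply (f := h), h0] at h2π
  simpa using congrArg im h2π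

theorem not_hasContinuousLogOn_sub_sphere {c p : ℂ} {r : ℝ} (hp : p ∈ ball c r) :
    ¬ HasContinuousLogOn (fun z ↦ z - p) (sphere c r) := by
  intro hlog
  have hr : 0 < r := pos_of_mem_ball hp
  have hne : ∀ z ∈ sphere c r, z - c ≠ 0 := fun z hz ↦
    sub_ne_zero.2 (ne_of_mem_sphere hz hr.ne')
  have hratio : HasContinuousLogOn (fun z ↦ 1 + (c - p) / (z - c)) (sphere c r) := by
    refine .of_mapsTo_slitPlane (continuousOn_const.add
      (continuousOn_const.div (by fun_prop) hne)) fun z hz ↦ mem_slitPlane_of_norm_lt_one ?_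
    rwa [norm_div, mem_sphere_iff_norm.1 hz, div_lt_one hr, ← mem_ball_iff_norm']
  refine not_hasContinuousLogOn_sub_center c hr ((hlog.div hratio).congr fun z hz ↦ ?_)
  refine eq_div_of_mul_eq (hratio.ne_zero hz) ?_
  rw [mul_add, mul_div_cancel₀ _ (hne z hz)]
  ring

-- Otherwise `z - p` would agree, outside a bounded set, with a nonvanishing function on `ℂ`.
theorem not_hasContinuousLogOn_frontier {U : Set ℂ} (hU : IsBounded U) {p q : ℂ} (hp : p ∈ U)
    (hq : q ∉ U) : ¬ HasContinuousLogOn (fun z ↦ (z - p) / (z - q)) (frontier U) := by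
  classical
  intro hlog
  have hqne : ∀ z ∈ frontier U, z - q ≠ 0 := fun z hz ↦ (div_ne_zero_iff.1 (hlog.ne_zero hz)).2
  obtain ⟨h, hc, hh⟩ := hlog
  obtain ⟨H, hH⟩ := ContinuousMap.exists_restrict_eq isClosed_frontier
    ⟨(frontier U).domRestrict h, hc.domRestrict⟩
  have hHh : ∀ z ∈ frontier U, H z = h z := fun z hz ↦ congrArg (fun f ↦ f ⟨z, hz⟩) hH
  have hlogG : HasContinuousLogOn
      (U.piecewise (fun z ↦ (z - q) * exp (H z)) fun z ↦ z - p) univ := by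
    refine .univ_of_ne_zero (Continuous.piecewise (fun z hz ↦ ?_) (by fun_prop) (by fun_prop))
      fun z ↦ ?_
    · rw [hHh z hz, hh z hz, mul_div_cancel₀ _ (hqne z hz)]
    · by_cases hz : z ∈ U
      · rw [piecewise_eq_of_mem _ _ _ hz]
        exact mul_ne_zero (sub_ne_zero.2 fun hzq ↦ hq (hzq ▸ hz)) (exp_ne_zero _)
      · rw [piecewise_eq_of_notMem _ _ _ hz]
        exact sub_ne_zero.2 fun hzp ↦ hz (hzp ▸ hp)
  obtain ⟨r, hUr⟩ := hU.subset_ball 0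
  refine not_hasContinuousLogOn_sub_sphere (hUr hp) ((hlogG.mono (subset_univ _)).congr
    fun z hz ↦ ?_)
  have hzU : z ∉ U := fun hzU ↦ (mem_ball.1 (hUr hzU)).ne (mem_sphere.1 hz)
  rw [piecewise_eq_of_notMem _ _ _ hzU]

theorem hasContinuousLogOn_div_of_isPreconnected {X S : Set ℂ} (hX : IsClosed X)
    (hS : IsPreconnected S) (hSX : S ⊆ Xᶜ) {p q : ℂ} (hp : p ∈ S) (hq : q ∈ S) :
    HasContinuousLogOn (fun z ↦ (z - p) / (z - q)) X := by
  have hne : ∀ {p z}, p ∈ S → z ∈ X → z - p ≠ 0 := fun hp hz ↦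
    sub_ne_zero.2 fun h ↦ hSX hp (h ▸ hz)
  refine hS.induction₂ (fun p q ↦ HasContinuousLogOn (fun z ↦ (z - p) / (z - q)) X)
    (fun x hx ↦ ?_) (fun x y z _ hy _ hxy hyz ↦ ?_) (fun x y _ _ hxy ↦ ?_) hp hq
  · obtain ⟨ε, hε, hball⟩ := Metric.isOpen_iff.1 hX.isOpen_compl x (hSX hx)
    filter_upwards [mem_nhdsWithin_of_mem_nhds (ball_mem_nhds x hε)] with y hyx
    have hratio : HasContinuousLogOn (fun z ↦ 1 + (x - y) / (z - x)) X := by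
      refine .of_mapsTo_slitPlane (continuousOn_const.add (continuousOn_const.div (by fun_prop)
        fun z hz ↦ hne hx hz)) fun z hz ↦ mem_slitPlane_of_norm_lt_one ?_
      have hzx : ε ≤ ‖z - x‖ := not_lt.1 fun h ↦ hball (mem_ball_iff_norm.2 h) hz
      rw [norm_div, div_lt_one (hε.trans_le hzx)]
      exact (mem_ball_iff_norm'.1 hyx).trans_le hzx
    refine hratio.inv.congr fun z hz ↦ ?_
    simp only [one_add_div (hne hx hz), inv_div]
    ring
  · exact (hxy.mul hyz).congr fun w hw ↦ (div_mul_div_cancel₀ (hne hy hw)).symm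
  · exact hxy.inv.congr fun w _ ↦ (inv_div _ _).symm

-- Janiszewski's theorem: the logarithms of `(z - p) / (z - q)` on `A` and on `B` glue to one on
-- `frontier U`.
theorem mem_of_frontier_subset_union {A B S T U : Set ℂ} {p q : ℂ} (hA : IsClosed A)
    (hB : IsClosed B) (hAB : IsPreconnected (A ∩ B))
    (hS : IsPreconnected S) (hSA : S ⊆ Aᶜ) (hpS : p ∈ S) (hqS : q ∈ S)
    (hT : IsPreconnected T) (hTB : T ⊆ Bᶜ) (hpT : p ∈ T) (hqT : q ∈ T)
    (hU : IsBounded U) (hUAB : frontier U ⊆ A ∪ B) (hpU : p ∈ U) : q ∈ U := by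
  by_contra hqU
  exact not_hasContinuousLogOn_frontier hU hpU hqU <|
    (HasContinuousLogOn.union hA hB hAB (hasContinuousLogOn_div_of_isPreconnected hA hS hSA hpS hqS)
      (hasContinuousLogOn_div_of_isPreconnected hB hT hTB hpT hqT)).mono hUAB

theorem isPreconnected_compl_closedBall {E : Type*} [NormedAddCommGroup E] [NormedSpace ℝ E]
    (hE : 1 < Module.rank ℝ E) (a : E) (r : ℝ) : IsPreconnected (closedBall a r)ᶜ := by
  rcases lt_or_ge r 0 with hr | hr
  · rw [closedBall_eq_empty.2 hr, compl_empty]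
    exact isPreconnected_univ
  have himage : (closedBall a r)ᶜ = (fun x : ℝ × E ↦ a + x.1 • x.2) '' (Ioi r ×ˢ sphere 0 1) := by
    ext z
    simp only [mem_compl_iff, mem_closedBall_iff_norm, not_le, mem_image, mem_prod, mem_Ioi,
      mem_sphere_zero_iff_norm, Prod.exists]
    refine ⟨fun hz ↦ ⟨‖z - a‖, ‖z - a‖⁻¹ • (z - a), ⟨hz, ?_⟩, ?_⟩, ?_⟩
    · exact norm_smul_inv_norm (𝕜 := ℝ) (norm_pos_iff.1 (hr.trans_lt hz))
    · rw [smul_inv_smul₀ (hr.trans_lt hz).ne', add_sub_cancel]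
    · rintro ⟨t, u, ⟨ht, hu⟩, rfl⟩
      rwa [add_sub_cancel_left, norm_smul, hu, mul_one, Real.norm_of_nonneg (hr.trans ht.le)]
  rw [himage]
  exact (isPreconnected_Ioi.prod (isPreconnected_sphere hE 0 1)).image _ (by fun_prop)

theorem subset_closedBall_of_frontier_subset {X N U : Set ℂ} {a q : ℂ} {δ ε : ℝ}
    (hX : IsClosed X) (hXc : IsPreconnected Xᶜ) (hN : IsPreconnected N)
    (hNX : N ⊆ frontier X ∩ closedBall a ε) (hδN : frontier X ∩ closedBall a δ ⊆ N) (hδε : δ ≤ ε)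
    (hU : IsBounded U) (hUX : U ⊆ Xᶜ) (hUfr : frontier U ⊆ closedBall a δ ∪ frontier X)
    (hqU : q ∉ U) (hqX : q ∉ X) (hqε : q ∉ closedBall a ε) : U ⊆ closedBall a ε := by
  intro p hpU
  by_contra hpε
  have hNclosure : closure N ⊆ frontier X ∩ closedBall a ε :=
    closure_minimal hNX (isClosed_frontier.inter isClosed_closedBall)
  have hAB : (closedBall a δ ∪ closure N) ∩ frontier X = closure N := by
    rw [union_inter_distrib_right, inter_comm (closedBall a δ),
      inter_eq_left.2 (hNclosure.trans inter_subset_left)]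
    exact union_eq_right.2 (hδN.trans subset_closure)
  refine hqU <| mem_of_frontier_subset_union (isClosed_closedBall.union isClosed_closure)
    isClosed_frontier (hAB ▸ hN.closure)
    (isPreconnected_compl_closedBall (rank_real_complex ▸ Cardinal.one_lt_two) a ε) ?_ hpε hqε
    hXc (compl_subset_compl.2 hX.frontier_subset) (hUX hpU) hqX hU ?_ hpU
  · exact compl_subset_compl.2
      (union_subset (closedBall_subset_closedBall hδε) (hNclosure.trans inter_subset_right))
  · exact hUfr.trans (union_subset_union_left _ subset_union_left)

theorem exists_isPreconnected_nhds_subset {α : Type*} [PseudoMetricSpace α] {S : Set α}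
    [LocallyConnectedSpace S] {a : α} (ha : a ∈ S) {ε : ℝ} (hε : 0 < ε) :
    ∃ δ > 0, δ ≤ ε ∧ ∃ N, IsPreconnected N ∧ N ⊆ S ∩ closedBall a ε ∧
      S ∩ closedBall a δ ⊆ N := by
  obtain ⟨V, ⟨hV, hVc⟩, hVε⟩ := (locallyConnectedSpace_iff_connected_basis.1 ‹_›
    (⟨a, ha⟩ : S)).mem_iff.1 (closedBall_mem_nhds _ hε)
  obtain ⟨δ, hδ, hδV⟩ := nhds_basis_closedBall.mem_iff.1 hV
  refine ⟨min δ ε, lt_min hδ hε, min_le_right _ _, (↑) '' V,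
    hVc.image _ continuous_subtype_val.continuousOn, ?_, ?_⟩
  · rintro _ ⟨x, hx, rfl⟩
    exact ⟨x.2, hVε hx⟩
  · rintro x ⟨hxS, hx⟩
    exact ⟨⟨x, hxS⟩, hδV (closedBall_subset_closedBall (min_le_left _ _) hx), rfl⟩

/-! ### Conformal isomorphisms -/

theorem map_nhdsNE_of_injOn {f : ℂ → ℂ} {c : ℂ} {s : Set ℂ} (hf : AnalyticAt ℂ f c)
    (hs : s ∈ 𝓝[≠] c) (hi : InjOn f s) : map f (𝓝[≠] c) = 𝓝[≠] (f c) := by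
  have hnonconst : ¬ ∀ᶠ z in 𝓝[≠] c, f z = f c := by
    intro h
    obtain ⟨x, ⟨hxs, hx⟩, hxc⟩ :=
      ((eventually_mem_set.2 hs).and h |>.and self_mem_nhdsWithin).exists
    obtain ⟨y, ⟨hys, hy⟩, hyx⟩ := ((eventually_mem_set.2 hs).and h |>.and
      (mem_nhdsWithin_of_mem_nhds (isOpen_ne.mem_nhds (Ne.symm hxc)))).exists
    exact hyx (hi hys hxs (hy.trans hx.symm))
  refine le_antisymm (tendsto_nhdsWithin_iff.2 ⟨hf.continuousAt.mono_left nhdsWithin_le_nhds,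
    (hf.eventually_eq_or_eventually_ne analyticAt_const).resolve_left
      fun h ↦ hnonconst (h.filter_mono nhdsWithin_le_nhds)⟩) fun t ht ↦ ?_
  have himage : f '' insert c (f ⁻¹' t) ∈ 𝓝 (f c) :=
    (hf.eventually_constant_or_nhds_le_map_nhds.resolve_left
      fun h ↦ hnonconst (h.filter_mono nhdsWithin_le_nhds))
      (image_mem_map (insert_mem_nhds_iff.2 ht))
  rw [← insert_mem_nhds_iff]
  refine mem_of_superset himage ?_
  rw [image_insert_eq]
  exact insert_subset_insert (image_preimage_subset f t)

theorem isOpen_image_of_injOn {f : ℂ → ℂ} {s : Set ℂ} (hs : IsOpen s)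
    (hf : DifferentiableOn ℂ f s) (hi : InjOn f s) : IsOpen (f '' s) := by
  rw [isOpen_iff_mem_nhds]
  rintro _ ⟨z, hz, rfl⟩
  have hs' := hs.mem_nhds hz
  rw [← insert_eq_of_mem (mem_image_of_mem f hz), insert_mem_nhds_iff,
    ← map_nhdsNE_of_injOn (hf.analyticAt hs') (mem_nhdsWithin_of_mem_nhds hs') hi]
  exact image_mem_map (mem_nhdsWithin_of_mem_nhds hs')

-- `f` omits, near `c`, the open image of a set away from `c`.
theorem exists_eventually_le_norm_sub_of_injOn {f : ℂ → ℂ} {c : ℂ} {s : Set ℂ}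
    (hs : s ∈ 𝓝[≠] c) (hf : DifferentiableOn ℂ f s) (hi : InjOn f s) :
    ∃ w : ℂ, ∃ δ > 0, ∀ᶠ z in 𝓝[≠] c, δ ≤ ‖f z - w‖ := by
  obtain ⟨u, hu, hcu, hus⟩ := mem_nhdsWithin.1 hs
  obtain ⟨x, hxu, hxc⟩ := Filter.nonempty_of_mem (inter_mem_nhdsWithin {c}ᶜ (hu.mem_nhds hcu))
  obtain ⟨V, W, hV, hW, hxV, hcW, hVW⟩ := t2_separation hxu
  have hsub : V ∩ (u ∩ {c}ᶜ) ⊆ s := inter_subset_right.trans hus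
  have hopen : IsOpen (f '' (V ∩ (u ∩ {c}ᶜ))) := isOpen_image_of_injOn
    (hV.inter (hu.inter isOpen_compl_singleton)) (hf.mono hsub) (hi.mono hsub)
  obtain ⟨δ, hδ, hball⟩ := Metric.isOpen_iff.1 hopen (f x) ⟨x, ⟨hxV, hxc, hxu⟩, rfl⟩
  refine ⟨f x, δ, hδ, ?_⟩
  filter_upwards [hs, mem_nhdsWithin_of_mem_nhds (hW.mem_nhds hcW)] with z hzs hzW
  by_contra! hlt
  obtain ⟨y, hy, hyz⟩ := hball (mem_ball_iff_norm.2 hlt)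
  exact disjoint_left.1 hVW hy.1 (hi (hsub hy) hzs hyz ▸ hzW)

theorem exists_map_nhdsNE_eq_of_isBoundedUnder {f : ℂ → ℂ} {c : ℂ} {s : Set ℂ}
    (hs : s ∈ 𝓝[≠] c) (hf : DifferentiableOn ℂ f s) (hi : InjOn f s)
    (hb : IsBoundedUnder (· ≤ ·) (𝓝[≠] c) fun z ↦ ‖f z‖) : ∃ b, map f (𝓝[≠] c) = 𝓝[≠] b := by
  have hd : ∀ᶠ z in 𝓝[≠] c, DifferentiableAt ℂ f z := by
    filter_upwards [eventually_eventually_nhdsWithin.2 (eventually_mem_set.2 hs),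
      self_mem_nhdsWithin] with z hz hzc
    rw [isOpen_compl_singleton.nhdsWithin_eq hzc] at hz
    exact hf.differentiableAt hz
  obtain ⟨b, hlim⟩ : ∃ b, Tendsto f (𝓝[≠] c) (𝓝 b) := by
    obtain ⟨C, hC⟩ := hb.eventually_le
    exact ⟨_, tendsto_limUnder_of_differentiable_on_punctured_nhds_of_bounded_under hd
      (isBoundedUnder_of_eventually_le (a := C + ‖f c‖) (hC.mono fun z hz ↦
        (norm_sub_le _ _).trans (add_le_add_left hz _)))⟩
  have hd_update : ∀ᶠ z in 𝓝[≠] c, DifferentiableAt ℂ (Function.update f c b) z := by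
    filter_upwards [hd, self_mem_nhdsWithin] with z hz hzc
    exact hz.congr_of_eventuallyEq ((eventually_ne_nhds hzc).mono
      fun y hy ↦ Function.update_of_ne hy _ _)
  have hanalytic : AnalyticAt ℂ (Function.update f c b) c :=
    analyticAt_of_differentiable_on_punctured_nhds_of_continuousAt hd_update
      (continuousAt_update_same.2 hlim)
  have hinj : InjOn (Function.update f c b) (s \ {c}) := by
    intro x hx y hy hxy
    rw [Function.update_of_ne hx.2, Function.update_of_ne hy.2] at hxy
    exact hi hx.1 hy.1 hxy
  have hupdate : f =ᶠ[𝓝[≠] c] Function.update f c b :=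
    eventually_mem_nhdsWithin.mono fun z hz ↦ (Function.update_of_ne hz _ _).symm
  refine ⟨b, ?_⟩
  rw [map_congr hupdate, map_nhdsNE_of_injOn hanalytic (inter_mem hs self_mem_nhdsWithin) hinj,
    Function.update_self]

-- `1 / (f - w)` is bounded near `c` for some `w`, so its singularity at `c` is removable.
theorem map_nhdsNE_eq_nhdsNE_or_cobounded {f : ℂ → ℂ} {c : ℂ} {s : Set ℂ}
    (hs : s ∈ 𝓝[≠] c) (hf : DifferentiableOn ℂ f s) (hi : InjOn f s) :
    (∃ a, map f (𝓝[≠] c) = 𝓝[≠] a) ∨ map f (𝓝[≠] c) = cobounded ℂ := by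
  obtain ⟨w, δ, hδ, hfw⟩ := exists_eventually_le_norm_sub_of_injOn hs hf hi
  obtain ⟨b, hb⟩ : ∃ b, map (fun z ↦ (f z - w)⁻¹) (𝓝[≠] c) = 𝓝[≠] b := by
    refine exists_map_nhdsNE_eq_of_isBoundedUnder (inter_mem hs hfw)
      (((hf.mono inter_subset_left).sub_const w).inv
        fun z hz ↦ norm_pos_iff.1 (hδ.trans_le hz.2))
      (fun x hx y hy hxy ↦ hi hx.1 hy.1 (sub_left_injective (inv_injective hxy)))
      (isBoundedUnder_of_eventually_le (a := δ⁻¹) (hfw.mono fun z hz ↦ ?_))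
    rw [norm_inv]
    exact inv_anti₀ hδ hz
  have hmap : map f (𝓝[≠] c) = map (· + w) (map (·⁻¹) (𝓝[≠] b)) := by
    simp only [← hb, map_map, Function.comp_def, inv_inv, sub_add_cancel]
  rcases eq_or_ne b 0 with rfl | hb0
  · right
    rw [hmap, show map (·⁻¹) (𝓝[≠] (0 : ℂ)) = cobounded ℂ from inv_nhdsNE_zero,
      cobounded_eq_cocompact]
    exact (Homeomorph.addRight w).map_cocompact
  · left
    refine ⟨b⁻¹ + w, ?_⟩
    rw [hmap, map_nhdsNE_of_injOn (analyticAt_inv hb0) univ_mem inv_injective.injOn]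
    exact map_nhdsNE_of_injOn (by fun_prop) univ_mem (add_left_injective w).injOn

theorem disjoint_image_inter_image_sdiff {α β : Type*} {f : α → β} {s : Set α} (hf : InjOn f s)
    (t : Set α) : Disjoint (f '' (s ∩ t)) (f '' (s \ t)) :=
  disjoint_image_image fun _ hx _ hy hxy ↦ hy.2 (hf hx.1 hy.1 hxy ▸ hx.2)

/-- `f` maps the open set `s` biholomorphically onto `t`. Injective holomorphic maps have
holomorphic inverses, so bijectivity suffices. -/
structure IsConformalIso (f : ℂ → ℂ) (s t : Set ℂ) : Prop where
  isOpen_source : IsOpen s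
  differentiableOn : DifferentiableOn ℂ f s
  bijOn : BijOn f s t

namespace IsConformalIso

variable {f : ℂ → ℂ} {s t : Set ℂ}

theorem isOpen_image (hf : IsConformalIso f s t) {U : Set ℂ} (hU : IsOpen U) (hUs : U ⊆ s) :
    IsOpen (f '' U) :=
  isOpen_image_of_injOn hU (hf.differentiableOn.mono hUs) (hf.bijOn.injOn.mono hUs)

theorem isOpen_target (hf : IsConformalIso f s t) : IsOpen t :=
  hf.bijOn.image_eq ▸ hf.isOpen_image hf.isOpen_source Subset.rfl

theorem mem_frontier_of_mapClusterPt (hf : IsConformalIso f s t) {l : Filter ℂ} (hsl : s ∈ l)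
    (hl : ∀ x ∈ s, Disjoint (𝓝 x) l) {y : ℂ} (hy : MapClusterPt y l f) : y ∈ frontier t := by
  rw [hf.isOpen_target.frontier_eq]
  refine ⟨mem_closure_iff_clusterPt.2 (hy.clusterPt.mono
    (le_principal_iff.2 (mem_of_superset (image_mem_map hsl) hf.bijOn.mapsTo.image_subset))),
    fun hyt ↦ ?_⟩
  obtain ⟨x, hx, rfl⟩ := hf.bijOn.surjOn hyt
  obtain ⟨U, ⟨hxU, hU⟩, hUl⟩ := (nhds_basis_opens x).disjoint_iff_left.1 (hl x hx)
  have himage : f '' (U ∩ s) ∈ 𝓝 (f x) := (hf.isOpen_image (hU.inter hf.isOpen_source)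
    inter_subset_right).mem_nhds ⟨x, ⟨hxU, hx⟩, rfl⟩
  obtain ⟨z, ⟨y, hy, hyz⟩, hzU, hzs⟩ :=
    ((mapClusterPt_iff_frequently.1 hy _ himage).and_eventually (inter_mem hUl hsl)).exists
  exact hzU (hf.bijOn.injOn hy.2 hzs hyz ▸ hy.1)

theorem mem_frontier_of_mapClusterPt_nhdsWithin (hf : IsConformalIso f s t) {ζ y : ℂ} (hζ : ζ ∉ s)
    (hy : MapClusterPt y (𝓝[s] ζ) f) : y ∈ frontier t :=
  hf.mem_frontier_of_mapClusterPt self_mem_nhdsWithin (fun _ hx ↦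
    (disjoint_nhds_nhds.2 (ne_of_mem_of_not_mem hx hζ)).mono_right nhdsWithin_le_nhds) hy

theorem closure_image_inter_subset (hf : IsConformalIso f s t) {T : Set ℂ} (hT : IsClosed T) :
    closure (f '' (s ∩ T)) ⊆ f '' (s ∩ T) ∪ frontier t := by
  intro w hw
  by_cases hwt : w ∈ t
  · obtain ⟨z, hz, rfl⟩ := hf.bijOn.surjOn hwt
    refine .inl ⟨z, ⟨hz, not_not.1 fun hzT ↦ ?_⟩, rfl⟩
    exact disjoint_left.1 ((disjoint_image_inter_image_sdiff hf.bijOn.injOn T).closure_left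
      (hf.isOpen_image (hf.isOpen_source.sdiff hT) sdiff_subset)) hw ⟨z, ⟨hz, hzT⟩, rfl⟩
  · refine .inr (hf.isOpen_target.frontier_eq ▸ ⟨closure_mono ?_ hw, hwt⟩)
    exact (image_mono inter_subset_left).trans hf.bijOn.image_eq.subset

-- The alternative limit `a` of `f` at infinity would be an isolated point of `X`.
theorem map_cobounded {X : Set ℂ} (hf : IsConformalIso f s Xᶜ) (hs : s ∈ cobounded ℂ)
    (hX : IsPreconnected X) (hX' : X.Nontrivial) : map f (cobounded ℂ) = cobounded ℂ := by
  have hs_inv : s⁻¹ ∩ {0}ᶜ ∈ 𝓝[≠] (0 : ℂ) :=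
    inter_mem (by rw [← inv_cobounded₀]; exact Filter.inv_mem_inv hs) self_mem_nhdsWithin
  have hmap : map (f ∘ Inv.inv) (𝓝[≠] 0) = map f (cobounded ℂ) := by
    rw [← map_map, show map Inv.inv (𝓝[≠] (0 : ℂ)) = cobounded ℂ from inv_nhdsNE_zero]
  rw [← hmap]
  refine (map_nhdsNE_eq_nhdsNE_or_cobounded hs_inv (hf.differentiableOn.comp
    (differentiableOn_inv.mono inter_subset_right) fun z hz ↦ hz.1)
    (hf.bijOn.injOn.comp inv_injective.injOn fun z hz ↦ hz.1)).resolve_left ?_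
  rintro ⟨a, ha⟩
  rw [hmap] at ha
  have haX : a ∈ X := by
    have := hf.mem_frontier_of_mapClusterPt hs (fun x _ ↦ disjoint_nhds_cobounded x)
      (y := a) (by rw [MapClusterPt, ha]; exact ClusterPt.of_le_nhds nhdsWithin_le_nhds)
    rw [hf.isOpen_target.frontier_eq] at this
    exact not_not.1 this.2
  have hX_compl : Xᶜ ∈ 𝓝[≠] a :=
    ha ▸ mem_of_superset (image_mem_map hs) hf.bijOn.mapsTo.image_subset
  exact (hX.preperfect_of_nontrivial hX' a haX).ne (by simpa [inf_principal_eq_bot])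

theorem isBounded_image_inter {B : Set ℂ} (hf : IsConformalIso f s t) (hs : s ∈ cobounded ℂ)
    (hf_map : map f (cobounded ℂ) = cobounded ℂ) (hB : IsBounded B) :
    IsBounded (f '' (s ∩ B)) := by
  have hfar : f '' (s \ B) ∈ cobounded ℂ := by
    rw [← hf_map]
    exact image_mem_map (inter_mem hs (isBounded_def.1 hB))
  exact isBounded_def.2 (mem_of_superset hfar (subset_compl_iff_disjoint_left.2
    (disjoint_image_inter_image_sdiff hf.bijOn.injOn B)))

end IsConformalIso

/-! ### Continuous extensions to the circle -/

theorem isClosed_image_of_tendsto_cocompact {α β : Type*} [TopologicalSpace α]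
    [TopologicalSpace β] [T2Space β] [WeaklyLocallyCompactSpace β] {f : α → β} {s : Set α}
    (hs : IsClosed s) (hf : ContinuousOn f s) (hlim : Tendsto f (cocompact α) (cocompact β)) :
    IsClosed (f '' s) := by
  have hproper : IsProperMap (s.domRestrict f) := isProperMap_iff_tendsto_cocompact.2
    ⟨hf.domRestrict, hlim.comp hs.isClosedEmbedding_subtypeVal.tendsto_cocompact⟩
  rw [← range_domRestrict]
  exact hproper.isClosedMap.isClosed_range

theorem locallyConnectedSpace_image {α β : Type*} [TopologicalSpace α] [TopologicalSpace β]
    [T2Space β] {f : α → β} {K : Set α} [LocallyConnectedSpace K] (hK : IsCompact K)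
    (hf : ContinuousOn f K) : LocallyConnectedSpace (f '' K) := by
  have := isCompact_iff_compactSpace.1 hK
  have hcont : Continuous (K.imageFactorization f) := hf.domRestrict.subtype_mk _
  exact (hcont.isClosedMap.isQuotientMap hcont imageFactorization_surjective
    ).isCoinducing.locallyConnectedSpace

theorem IsConformalIso.image_frontier_eq {f F : ℂ → ℂ} {s t : Set ℂ} (hf : IsConformalIso f s t)
    (hF : ContinuousOn F (closure s)) (hFf : EqOn F f s)
    (hlim : Tendsto F (cobounded ℂ) (cobounded ℂ)) : F '' frontier s = frontier t := by
  rw [hf.isOpen_source.frontier_eq]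
  refine Subset.antisymm ?_ fun p hp ↦ ?_
  · rintro _ ⟨ζ, ⟨hζ, hζs⟩, rfl⟩
    have := mem_closure_iff_nhdsWithin_neBot.1 hζ
    refine hf.mem_frontier_of_mapClusterPt_nhdsWithin hζs (Tendsto.mapClusterPt ?_)
    exact ((hF ζ hζ).mono_left (nhdsWithin_mono _ subset_closure)).congr'
      hFf.eventuallyEq_nhdsWithin
  · rw [cobounded_eq_cocompact] at hlim
    have hclosed : IsClosed (F '' closure s) :=
      isClosed_image_of_tendsto_cocompact isClosed_closure hF hlim
    have ht : t ⊆ F '' closure s := by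
      rw [← hf.bijOn.image_eq, ← hFf.image_eq]
      exact image_mono subset_closure
    obtain ⟨ζ, hζ, rfl⟩ := closure_minimal ht hclosed (frontier_subset_closure hp)
    refine ⟨ζ, ⟨hζ, fun hζs ↦ ?_⟩, rfl⟩
    rw [hf.isOpen_target.frontier_eq] at hp
    exact hp.2 (hFf hζs ▸ hf.bijOn.mapsTo hζs)

/-- The complement `{z | 1 < ‖z‖}` of the closed unit disk. -/
def exteriorDisk : Set ℂ := {z | 1 < ‖z‖}

theorem exteriorDisk_eq_compl_closedBall : exteriorDisk = (closedBall 0 1)ᶜ := by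
  ext z
  simp [exteriorDisk]

theorem isOpen_exteriorDisk : IsOpen exteriorDisk :=
  exteriorDisk_eq_compl_closedBall ▸ isClosed_closedBall.isOpen_compl

theorem exteriorDisk_mem_cobounded : exteriorDisk ∈ cobounded ℂ :=
  exteriorDisk_eq_compl_closedBall ▸ isBounded_def.1 isBounded_closedBall

theorem closure_exteriorDisk : closure exteriorDisk = {z | 1 ≤ ‖z‖} := by
  rw [exteriorDisk_eq_compl_closedBall, closure_compl, interior_closedBall _ one_ne_zero]
  ext z
  simp

theorem frontier_exteriorDisk : frontier exteriorDisk = sphere 0 1 := by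
  rw [exteriorDisk_eq_compl_closedBall, frontier_compl, frontier_closedBall _ one_ne_zero]

theorem exteriorDisk_inter_sphere_nonempty {ζ : ℂ} (hζ : ‖ζ‖ = 1) {ρ : ℝ} (hρ : 0 < ρ) :
    (exteriorDisk ∩ sphere ζ ρ).Nonempty := by
  refine ⟨(1 + ρ : ℝ) * ζ, ?_, ?_⟩
  · rw [exteriorDisk, mem_ofPred_eq, norm_mul, hζ, Complex.norm_of_nonneg (by positivity)]
    linarith
  · have hsub : (1 + ρ : ℝ) * ζ - ζ = ρ * ζ := by
      push_cast
      ring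
    rw [mem_sphere_iff_norm, hsub, norm_mul, hζ, Complex.norm_of_nonneg hρ.le, mul_one]

theorem locallyConnectedSpace_frontier_of_continuousOn {φ Φ : ℂ → ℂ} {X : Set ℂ}
    (hφ : IsConformalIso φ exteriorDisk Xᶜ) (hφ_map : map φ (cobounded ℂ) = cobounded ℂ)
    (hΦ : ContinuousOn Φ (closure exteriorDisk)) (hΦφ : EqOn Φ φ exteriorDisk) :
    LocallyConnectedSpace (frontier X) := by
  have hΦ_lim : Tendsto Φ (cobounded ℂ) (cobounded ℂ) :=
    Tendsto.congr' (hΦφ.eventuallyEq_of_mem exteriorDisk_mem_cobounded).symm hφ_map.le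
  rw [← frontier_compl, ← hφ.image_frontier_eq hΦ hΦφ hΦ_lim, frontier_exteriorDisk]
  have : Fact (Module.finrank ℝ ℂ = 1 + 1) := ⟨Complex.finrank_real_complex⟩
  have : LocallyConnectedSpace (sphere (0 : ℂ) 1) :=
    ChartedSpace.locallyConnectedSpace (EuclideanSpace ℝ (Fin 1)) (sphere (0 : ℂ) 1)
  refine locallyConnectedSpace_image (isCompact_sphere 0 1) (hΦ.mono ?_)
  exact frontier_exteriorDisk ▸ frontier_subset_closure

/-! ### The length–area estimate -/

theorem setLIntegral_enorm_deriv_sq_of_injOn {f : ℂ → ℂ} {s : Set ℂ} (hs : IsOpen s)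
    (hf : DifferentiableOn ℂ f s) (hi : InjOn f s) :
    ∫⁻ z in s, ‖deriv f z‖ₑ ^ 2 = volume (f '' s) := by
  rw [← lintegral_abs_det_fderiv_eq_addHaar_image volume hs.measurableSet (fun z hz ↦
    ((hf.differentiableAt (hs.mem_nhds hz)).hasDerivAt.hasFDerivAt.restrictScalars
      ℝ).hasFDerivWithinAt) hi]
  refine lintegral_congr fun z ↦ ?_
  have hdet : ((ContinuousLinearMap.toSpanSingleton ℂ (deriv f z)).restrictScalars ℝ).det =
      ‖deriv f z‖ ^ 2 := by
    simp [ContinuousLinearMap.det, LinearMap.det_restrictScalars, Algebra.norm_complex_eq,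
      Complex.normSq_eq_norm_sq]
  rw [hdet, abs_of_nonneg (by positivity), ENNReal.ofReal_pow (norm_nonneg _), ofReal_norm]

theorem lintegral_complex_eq_lintegral_lintegral {F : ℂ → ℝ≥0∞} (hF : Measurable F) :
    ∫⁻ z, F z = ∫⁻ x : ℝ, ∫⁻ y : ℝ, F ⟨x, y⟩ := by
  rw [← Complex.volume_preserving_equiv_real_prod.symm.lintegral_comp hF, Measure.volume_eq_prod,
    lintegral_prod (fun p ↦ F (Complex.measurableEquivRealProd.symm p))
      (hF.comp Complex.measurableEquivRealProd.symm.measurable).aemeasurable]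
  rfl

theorem frequently_atBot_lt_of_lintegral_ne_top {F : ℝ → ℝ≥0∞} (hF : ∫⁻ x, F x ≠ ⊤)
    {κ : ℝ≥0∞} (hκ : κ ≠ 0) : ∃ᶠ x in atBot, F x < κ := by
  intro h
  obtain ⟨N, hN⟩ := eventually_atBot.1 h
  refine hF (top_unique ?_)
  calc ⊤ = ∫⁻ _ in Iic N, κ := by rw [setLIntegral_const, Real.volume_Iic, ENNReal.mul_top hκ]
    _ ≤ ∫⁻ x in Iic N, F x :=
      setLIntegral_mono' measurableSet_Iic fun x hx ↦ not_lt.1 (hN x hx)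
    _ ≤ ∫⁻ x, F x := setLIntegral_le_lintegral _ _

theorem enorm_sub_sq_le_mul_setLIntegral {E : Type*} [NormedAddCommGroup E] [NormedSpace ℝ E]
    [CompleteSpace E] {γ γ' : ℝ → E} {a b : ℝ} (hab : a ≤ b)
    (hγ : ∀ t ∈ Icc a b, HasDerivAt γ (γ' t) t) (hγ' : ContinuousOn γ' (Icc a b)) :
    ‖γ b - γ a‖ₑ ^ 2 ≤ ENNReal.ofReal (b - a) * ∫⁻ t in Icc a b, ‖γ' t‖ₑ ^ 2 := by
  have hftc : ∫ t in a..b, γ' t = γ b - γ a :=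
    intervalIntegral.integral_eq_sub_of_hasDerivAt (uIcc_of_le hab ▸ hγ)
      (uIcc_of_le hab ▸ hγ').intervalIntegrable
  have hlength : ‖γ b - γ a‖ₑ ≤ ∫⁻ t in Icc a b, 1 * ‖γ' t‖ₑ := by
    rw [← hftc, intervalIntegral.integral_of_le hab, ← integral_Icc_eq_integral_Ioc]
    simpa only [one_mul] using enorm_integral_le_lintegral_enorm _
  have hholder := ENNReal.lintegral_mul_le_Lp_mul_Lq (volume.restrict (Icc a b))
    Real.HolderConjugate.two_two (f := 1) aemeasurable_const
    (hγ'.aestronglyMeasurable measurableSet_Icc).enorm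
  simp only [Pi.mul_apply, Pi.one_apply, ENNReal.rpow_two, one_pow, lintegral_one,
    Measure.restrict_apply_univ, Real.volume_Icc, one_div] at hholder
  calc ‖γ b - γ a‖ₑ ^ 2
      ≤ (ENNReal.ofReal (b - a) ^ (2⁻¹ : ℝ) *
          (∫⁻ t in Icc a b, ‖γ' t‖ₑ ^ 2) ^ (2⁻¹ : ℝ)) ^ 2 := by
        gcongr
        exact hlength.trans hholder
    _ = ENNReal.ofReal (b - a) * ∫⁻ t in Icc a b, ‖γ' t‖ₑ ^ 2 := by
        rw [← ENNReal.mul_rpow_of_nonneg _ _ (by norm_num), ← ENNReal.rpow_two,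
          ENNReal.rpow_inv_rpow two_ne_zero]

theorem edist_sq_le_mul_lintegral_indicator {f : ℂ → ℂ} {s : Set ℂ} (hs : IsOpen s)
    (hf : DifferentiableOn ℂ f s) {x a b y₁ y₂ : ℝ} (hsx : OrdConnected {y : ℝ | (⟨x, y⟩ : ℂ) ∈ s})
    (hab : ∀ z ∈ s, z.im ∈ Ioo a b) (hy₁ : (⟨x, y₁⟩ : ℂ) ∈ s) (hy₂ : (⟨x, y₂⟩ : ℂ) ∈ s) :
    edist (f ⟨x, y₁⟩) (f ⟨x, y₂⟩) ^ 2 ≤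
      ENNReal.ofReal (b - a) * ∫⁻ y : ℝ, s.indicator (‖deriv f ·‖ₑ ^ 2) ⟨x, y⟩ := by
  wlog hle : y₁ ≤ y₂ generalizing y₁ y₂
  · rw [edist_comm]
    exact this hy₂ hy₁ (le_of_not_ge hle)
  have hsub : ∀ y ∈ Icc y₁ y₂, (⟨x, y⟩ : ℂ) ∈ s := hsx.out hy₁ hy₂
  have hline : ∀ y : ℝ, HasDerivAt (fun t : ℝ ↦ (⟨x, t⟩ : ℂ)) I y := by
    intro y
    simp only [Complex.mk_eq_add_mul_I]
    simpa using ((hasDerivAt_id y).ofReal_comp.mul_const I).const_add (x : ℂ)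
  have hderiv : ∀ y ∈ Icc y₁ y₂,
      HasDerivAt (fun t : ℝ ↦ f ⟨x, t⟩) (deriv f ⟨x, y⟩ * I) y := fun y hy ↦
    (hf.differentiableAt (hs.mem_nhds (hsub y hy))).hasDerivAt.comp y (hline y)
  have hcont : ContinuousOn (fun y : ℝ ↦ deriv f ⟨x, y⟩ * I) (Icc y₁ y₂) :=
    ((hf.deriv hs).continuousOn.comp (fun y _ ↦ (hline y).continuousAt.continuousWithinAt)
      hsub).mul continuousOn_const
  calc edist (f ⟨x, y₁⟩) (f ⟨x, y₂⟩) ^ 2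
      ≤ ENNReal.ofReal (y₂ - y₁) * ∫⁻ y in Icc y₁ y₂, ‖deriv f ⟨x, y⟩ * I‖ₑ ^ 2 := by
        rw [edist_comm, edist_eq_enorm_sub]
        exact enorm_sub_sq_le_mul_setLIntegral hle hderiv hcont
    _ ≤ ENNReal.ofReal (b - a) * ∫⁻ y : ℝ, s.indicator (‖deriv f ·‖ₑ ^ 2) ⟨x, y⟩ := by
        gcongr ENNReal.ofReal (?_ - ?_) * ?_
        · exact (hab _ hy₂).2.le
        · exact (hab _ hy₁).1.le
        · refine (setLIntegral_mono' measurableSet_Icc fun y hy ↦ ?_).trans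
            (setLIntegral_le_lintegral (Icc y₁ y₂) _)
          rw [indicator_of_mem (hsub y hy)]
          simp [← ofReal_norm]

theorem frequently_atBot_dist_le_of_volume_image_ne_top {f : ℂ → ℂ} {s : Set ℂ} (hs : IsOpen s)
    (hf : DifferentiableOn ℂ f s) (hi : InjOn f s) (hvol : volume (f '' s) ≠ ⊤) {a b : ℝ}
    (hs_conn : ∀ x : ℝ, OrdConnected {y : ℝ | (⟨x, y⟩ : ℂ) ∈ s})
    (hs_im : ∀ z ∈ s, z.im ∈ Ioo a b) {η : ℝ} (hη : 0 < η) :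
    ∃ᶠ x : ℝ in atBot, ∀ y₁ y₂ : ℝ, (⟨x, y₁⟩ : ℂ) ∈ s → (⟨x, y₂⟩ : ℂ) ∈ s →
      dist (f ⟨x, y₁⟩) (f ⟨x, y₂⟩) ≤ η := by
  have henergy : ∫⁻ x : ℝ, ∫⁻ y : ℝ, s.indicator (‖deriv f ·‖ₑ ^ 2) ⟨x, y⟩ ≠ ⊤ := by
    rwa [← lintegral_complex_eq_lintegral_lintegral
      (((measurable_deriv f).enorm.pow_const 2).indicator hs.measurableSet),
      lintegral_indicator hs.measurableSet, setLIntegral_enorm_deriv_sq_of_injOn hs hf hi]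
  refine (frequently_atBot_lt_of_lintegral_ne_top henergy
    (κ := ENNReal.ofReal η ^ 2 / ENNReal.ofReal (b - a)) ?_).mono fun x hx y₁ y₂ hy₁ hy₂ ↦ ?_
  · simp [ENNReal.div_eq_zero_iff, hη]
  · rw [← ENNReal.ofReal_le_ofReal_iff hη.le, ← edist_dist]
    refine (ENNReal.pow_le_pow_left_iff two_ne_zero).1 ?_
    calc edist (f ⟨x, y₁⟩) (f ⟨x, y₂⟩) ^ 2
        ≤ ENNReal.ofReal (b - a) * ∫⁻ y : ℝ, s.indicator (‖deriv f ·‖ₑ ^ 2) ⟨x, y⟩ :=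
          edist_sq_le_mul_lintegral_indicator hs hf (hs_conn x) hs_im hy₁ hy₂
      _ ≤ ENNReal.ofReal (b - a) * (ENNReal.ofReal η ^ 2 / ENNReal.ofReal (b - a)) := by gcongr
      _ ≤ ENNReal.ofReal η ^ 2 := ENNReal.mul_div_le

theorem norm_one_add_exp_le_of_abs_im_le {s t : ℂ} (hre : s.re = t.re) (him : |s.im| ≤ |t.im|)
    (ht : |t.im| ≤ Real.pi) : ‖1 + exp t‖ ≤ ‖1 + exp s‖ := by
  have hsq : ∀ u : ℂ, ‖1 + exp u‖ ^ 2 =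
      1 + 2 * (Real.exp u.re * Real.cos u.im) + Real.exp u.re ^ 2 := by
    intro u
    rw [← Complex.normSq_eq_norm_sq, Complex.normSq_add, Complex.normSq_eq_norm_sq (exp u),
      Complex.norm_exp]
    simp [Complex.exp_re]
    ring
  refine le_of_pow_le_pow_left₀ two_ne_zero (norm_nonneg _) ?_
  rw [hsq, hsq, hre]
  gcongr
  rw [← Real.cos_abs t.im, ← Real.cos_abs s.im]
  exact Real.cos_le_cos_of_nonneg_of_le_pi (abs_nonneg _) ht him

theorem ordConnected_setOf_one_add_exp_mul_mem_exteriorDisk {ζ : ℂ} (hζ : ‖ζ‖ = 1) (x : ℝ) :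
    OrdConnected {y : ℝ | y ∈ Ioo (-Real.pi) Real.pi ∧ (1 + exp ⟨x, y⟩) * ζ ∈ exteriorDisk} := by
  refine ⟨fun y₁ ⟨hy₁, hE₁⟩ y₂ ⟨hy₂, hE₂⟩ y hy ↦ ⟨⟨hy₁.1.trans_le hy.1, hy.2.trans_lt hy₂.2⟩, ?_⟩⟩
  simp only [exteriorDisk, mem_ofPred_eq, norm_mul, hζ, mul_one] at hE₁ hE₂ ⊢
  rcases le_max_iff.1 (abs_le_max_abs_abs hy.1 hy.2) with h | h
  · exact hE₁.trans_le (norm_one_add_exp_le_of_abs_im_le rfl h (abs_lt.2 hy₁).le)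
  · exact hE₂.trans_le (norm_one_add_exp_le_of_abs_im_le rfl h (abs_lt.2 hy₂).le)

theorem mem_slitPlane_of_one_lt_norm_one_add {u : ℂ} (hu : ‖u‖ ≤ 2) (hu' : 1 < ‖1 + u‖) :
    u ∈ slitPlane := by
  by_contra hslit
  rw [Complex.mem_slitPlane_iff, not_or, not_lt, not_not] at hslit
  obtain ⟨hre, him⟩ := hslit
  lift u to ℝ using him
  rw [Complex.ofReal_re] at hre
  rw [Complex.norm_real, Real.norm_eq_abs, abs_of_nonpos hre] at hu
  rw [← Complex.ofReal_one, ← Complex.ofReal_add, Complex.norm_real, Real.norm_eq_abs,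
    lt_abs] at hu'
  grind

theorem exists_one_add_exp_mul_eq {ζ z : ℂ} (hζ : ‖ζ‖ = 1) {x : ℝ} (hx : x ≤ 0)
    (hz : z ∈ exteriorDisk ∩ sphere ζ (Real.exp x)) :
    ∃ y ∈ Ioo (-Real.pi) Real.pi, (1 + exp ⟨x, y⟩) * ζ = z := by
  have hζ0 : ζ ≠ 0 := norm_pos_iff.1 (hζ ▸ one_pos)
  obtain ⟨u, rfl⟩ : ∃ u, (1 + u) * ζ = z := ⟨z / ζ - 1, by field_simp; ring⟩
  obtain ⟨hzE, hz⟩ := hz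
  have hu : ‖u‖ = Real.exp x := by
    rwa [mem_sphere_iff_norm, add_mul, one_mul, add_sub_cancel_left, norm_mul, hζ, mul_one] at hz
  have hslit : u ∈ slitPlane := mem_slitPlane_of_one_lt_norm_one_add
    (hu ▸ (Real.exp_le_one_iff.2 hx).trans one_le_two) (by simpa [exteriorDisk, hζ] using hzE)
  have hlog : (⟨x, u.arg⟩ : ℂ) = log u := by
    apply Complex.ext <;> simp [Complex.log_re, Complex.log_im, hu]
  refine ⟨u.arg, ⟨Complex.neg_pi_lt_arg u, (Complex.arg_le_pi u).lt_of_ne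
    (Complex.mem_slitPlane_iff_arg.1 hslit).1⟩, ?_⟩
  rw [hlog, Complex.exp_log (Complex.slitPlane_ne_zero hslit)]

-- Wolff's lemma: in logarithmic polar coordinates around `ζ`, circular arcs become segments.
theorem frequently_dist_le_of_mem_sphere {φ : ℂ → ℂ} (hφ : DifferentiableOn ℂ φ exteriorDisk)
    (hi : InjOn φ exteriorDisk) {ζ : ℂ} (hζ : ‖ζ‖ = 1) {r : ℝ} (hr : 0 < r)
    (hvol : volume (φ '' (exteriorDisk ∩ ball ζ r)) ≠ ⊤) {η : ℝ} (hη : 0 < η) :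
    ∃ᶠ ρ in 𝓝[>] (0 : ℝ), ∀ z₁ ∈ exteriorDisk ∩ sphere ζ ρ, ∀ z₂ ∈ exteriorDisk ∩ sphere ζ ρ,
      dist (φ z₁) (φ z₂) ≤ η := by
  set T : ℂ → ℂ := fun s ↦ (1 + exp s) * ζ
  set S : Set ℂ := {s | s.re < Real.log r ∧ s.im ∈ Ioo (-Real.pi) Real.pi ∧ T s ∈ exteriorDisk}
  have hTS : MapsTo T S (exteriorDisk ∩ ball ζ r) := by
    rintro s ⟨hs, -, hsE⟩
    refine ⟨hsE, ?_⟩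
    have hT_sub : T s - ζ = exp s * ζ := by ring
    rwa [mem_ball_iff_norm, hT_sub, norm_mul, hζ, mul_one,
      Complex.norm_exp, ← Real.lt_log_iff_exp_lt hr]
  have hT_inj : InjOn T S := fun s hs t ht hst ↦
    Complex.exp_inj_of_neg_pi_lt_of_le_pi hs.2.1.1 hs.2.1.2.le ht.2.1.1 ht.2.1.2.le
      (add_right_injective 1 (mul_right_cancel₀ (norm_pos_iff.1 (hζ ▸ one_pos)) hst))
  have hS_open : IsOpen S := (isOpen_lt continuous_re continuous_const).inter
    ((isOpen_Ioo.preimage continuous_im).inter (isOpen_exteriorDisk.preimage (by fun_prop)))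
  have hsmall := frequently_atBot_dist_le_of_volume_image_ne_top (f := φ ∘ T) hS_open
    (hφ.comp (by fun_prop) fun s hs ↦ hs.2.2) (hi.comp hT_inj fun s hs ↦ hs.2.2)
    (measure_ne_top_of_subset (image_comp φ T S ▸ image_mono hTS.image_subset) hvol)
    (fun x ↦ ?_) (fun s hs ↦ hs.2.1) hη
  · rw [← Real.map_exp_atBot, frequently_map]
    refine (hsmall.and_eventually ((eventually_lt_atBot (Real.log r)).and
      (eventually_le_atBot 0))).mono fun x ⟨hx, hxr, hx0⟩ z₁ hz₁ z₂ hz₂ ↦ ?_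
    obtain ⟨y₁, hy₁, rfl⟩ := exists_one_add_exp_mul_eq hζ hx0 hz₁
    obtain ⟨y₂, hy₂, rfl⟩ := exists_one_add_exp_mul_eq hζ hx0 hz₂
    exact hx y₁ y₂ ⟨hxr, hy₁, hz₁.1⟩ ⟨hxr, hy₂, hz₂.1⟩
  · by_cases hx : x < Real.log r
    · simpa [S, hx] using ordConnected_setOf_one_add_exp_mul_mem_exteriorDisk hζ x
    · simpa [S, hx] using ordConnected_empty

/-! ### Boundary limits -/

theorem IsConformalIso.image_inter_subset_closedBall {f : ℂ → ℂ} {s X N V : Set ℂ} {a z : ℂ}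
    {δ ε : ℝ} (hf : IsConformalIso f s Xᶜ) (hs : s ∈ cobounded ℂ)
    (hf_map : map f (cobounded ℂ) = cobounded ℂ) (hXc : IsPreconnected Xᶜ) (hN : IsPreconnected N)
    (hNX : N ⊆ frontier X ∩ closedBall a ε) (hδN : frontier X ∩ closedBall a δ ⊆ N)
    (hδε : δ ≤ ε) (hV : IsOpen V) (hVb : IsBounded V)
    (hfV : f '' (s ∩ frontier V) ⊆ closedBall a δ) (hz : z ∈ s \ V)
    (hzε : f z ∉ closedBall a ε) : f '' (s ∩ V) ⊆ closedBall a ε := by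
  have hfr : frontier (f '' (s ∩ V)) ⊆ f '' (s ∩ frontier V) ∪ frontier X := by
    rw [(hf.isOpen_image (hf.isOpen_source.inter hV) inter_subset_left).frontier_eq,
      ← frontier_compl X]
    rintro w ⟨hw, hwV⟩
    refine (hf.closure_image_inter_subset isClosed_closure (closure_mono
      (image_mono (inter_subset_inter_right s subset_closure)) hw)).imp_left ?_
    rintro ⟨y, ⟨hys, hyV⟩, rfl⟩
    exact ⟨y, ⟨hys, hV.frontier_eq ▸ ⟨hyV, fun hy ↦ hwV ⟨y, ⟨hys, hy⟩, rfl⟩⟩⟩, rfl⟩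
  refine subset_closedBall_of_frontier_subset (isOpen_compl_iff.1 hf.isOpen_target) hXc hN hNX hδN
    hδε (hf.isBounded_image_inter hs hf_map hVb)
    ((image_mono inter_subset_left).trans hf.bijOn.image_eq.subset)
    (hfr.trans (union_subset_union_left _ hfV)) ?_ (hf.bijOn.mapsTo hz.1) hzε
  rintro ⟨y, hy, hyz⟩
  exact hz.2 (hf.bijOn.injOn hy.1 hz.1 hyz ▸ hy.2)

section

variable {φ : ℂ → ℂ} {X : Set ℂ} {ζ : ℂ}

theorem exists_seq_tendsto_dist_le_of_mem_sphere (hφ : IsConformalIso φ exteriorDisk Xᶜ)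
    (hφ_map : map φ (cobounded ℂ) = cobounded ℂ) (hζ : ‖ζ‖ = 1) :
    ∃ z : ℕ → ℂ, Tendsto z atTop (𝓝[exteriorDisk] ζ) ∧
      ∀ n, ∀ w ∈ exteriorDisk ∩ sphere ζ (dist (z n) ζ), dist (φ w) (φ (z n)) ≤ 1 / (n + 1) := by
  have hbdd : IsBounded (φ '' (exteriorDisk ∩ ball ζ 1)) :=
    hφ.isBounded_image_inter exteriorDisk_mem_cobounded hφ_map isBounded_ball
  have hcrosscut : ∀ n : ℕ, ∃ z ∈ exteriorDisk, dist z ζ ≤ 1 / (n + 1) ∧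
      ∀ w ∈ exteriorDisk ∩ sphere ζ (dist z ζ), dist (φ w) (φ z) ≤ 1 / (n + 1) := by
    intro n
    have hn : 0 < 1 / ((n : ℝ) + 1) := Nat.one_div_pos_of_nat
    obtain ⟨ρ, hρ, hρ0, hρn⟩ := ((frequently_dist_le_of_mem_sphere hφ.differentiableOn
      hφ.bijOn.injOn hζ one_pos hbdd.measure_lt_top.ne hn).and_eventually
        (Ioo_mem_nhdsGT hn)).exists
    obtain ⟨z, hzE, hz⟩ := exteriorDisk_inter_sphere_nonempty hζ hρ0
    rw [mem_sphere] at hz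
    subst hz
    exact ⟨z, hzE, hρn.le, fun w hw ↦ hρ w hw z ⟨hzE, rfl⟩⟩
  choose z hzE hz hdist using hcrosscut
  exact ⟨z, tendsto_nhdsWithin_iff.2 ⟨tendsto_iff_dist_tendsto_zero.2 (squeeze_zero
    (fun _ ↦ dist_nonneg) hz tendsto_one_div_add_atTop_nhds_zero_nat), .of_forall hzE⟩, hdist⟩

theorem exists_frequently_image_inter_sphere_subset (hφ : IsConformalIso φ exteriorDisk Xᶜ)
    (hφ_map : map φ (cobounded ℂ) = cobounded ℂ) (hζ : ‖ζ‖ = 1) :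
    ∃ a ∈ frontier X, ∀ δ > 0,
      ∃ᶠ ρ in 𝓝[>] (0 : ℝ), φ '' (exteriorDisk ∩ sphere ζ ρ) ⊆ closedBall a δ := by
  have hζE : ζ ∉ exteriorDisk := hζ.le.not_gt
  obtain ⟨z, hz, hdist⟩ := exists_seq_tendsto_dist_le_of_mem_sphere hφ hφ_map hζ
  have hbdd : IsBounded (φ '' (exteriorDisk ∩ ball ζ 1)) :=
    hφ.isBounded_image_inter exteriorDisk_mem_cobounded hφ_map isBounded_ball
  have hz_mem : ∀ᶠ n in atTop, φ (z n) ∈ closure (φ '' (exteriorDisk ∩ ball ζ 1)) :=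
    (hz.eventually_mem (inter_mem_nhdsWithin _ (ball_mem_nhds ζ one_pos))).mono
      fun n hn ↦ subset_closure (mem_image_of_mem φ hn)
  obtain ⟨a, -, ha⟩ :=
    hbdd.isCompact_closure.exists_mapClusterPt_of_frequently hz_mem.frequently
  have hz_dist : Tendsto (fun n ↦ dist (z n) ζ) atTop (𝓝[>] 0) := by
    rw [tendsto_nhdsWithin_iff] at hz ⊢
    exact ⟨tendsto_iff_dist_tendsto_zero.1 hz.1,
      hz.2.mono fun n hn ↦ dist_pos.2 (ne_of_mem_of_not_mem hn hζE)⟩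
  refine ⟨a, ?_, fun δ hδ ↦ hz_dist.frequently ?_⟩
  · rw [← frontier_compl]
    exact hφ.mem_frontier_of_mapClusterPt_nhdsWithin hζE (.of_comp hz ha)
  · refine ((mapClusterPt_iff_frequently.1 ha _ (closedBall_mem_nhds a (half_pos hδ)))
      |>.and_eventually (tendsto_one_div_add_atTop_nhds_zero_nat.eventually_le_const
        (half_pos hδ))).mono ?_
    rintro n ⟨hna, hn⟩ _ ⟨w, hw, rfl⟩
    rw [mem_closedBall] at hna ⊢
    linarith [dist_triangle (φ w) (φ (z n)) a, hdist n w hw]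

theorem exists_tendsto_nhdsWithin_exteriorDisk (hφ : IsConformalIso φ exteriorDisk Xᶜ)
    (hφ_map : map φ (cobounded ℂ) = cobounded ℂ) (hX : IsPreconnected Xᶜ)
    [LocallyConnectedSpace (frontier X)] (hζ : ‖ζ‖ = 1) :
    ∃ a, Tendsto φ (𝓝[exteriorDisk] ζ) (𝓝 a) := by
  obtain ⟨a, ha, hsmall⟩ := exists_frequently_image_inter_sphere_subset hφ hφ_map hζ
  refine ⟨a, nhds_basis_closedBall.tendsto_right_iff.2 fun ε hε ↦ ?_⟩
  obtain ⟨δ, hδ, hδε, N, hN, hNX, hδN⟩ := exists_isPreconnected_nhds_subset ha hε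
  obtain ⟨z, hz, hzε⟩ : ∃ z ∈ exteriorDisk, φ z ∉ closedBall a ε :=
    ((eventually_mem_set.2 exteriorDisk_mem_cobounded).and
      (hφ_map.le (isBounded_def.1 isBounded_closedBall))).exists
  have hzζ : 0 < dist z ζ := dist_pos.2 (ne_of_mem_of_not_mem hz hζ.le.not_gt)
  obtain ⟨ρ, hρ, hρ0, hρz⟩ := ((hsmall δ hδ).and_eventually (Ioo_mem_nhdsGT hzζ)).exists
  have htrap : φ '' (exteriorDisk ∩ ball ζ ρ) ⊆ closedBall a ε := by
    refine hφ.image_inter_subset_closedBall exteriorDisk_mem_cobounded hφ_map hX hN hNX hδN hδε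
      isOpen_ball isBounded_ball ?_ ⟨hz, fun h ↦ (mem_ball.1 h).not_gt hρz⟩ hzε
    rwa [frontier_ball _ hρ0.ne']
  filter_upwards [inter_mem_nhdsWithin exteriorDisk (ball_mem_nhds ζ hρ0)] with w hw
  exact htrap (mem_image_of_mem φ hw)

theorem exists_continuousOn_extension (hφ : IsConformalIso φ exteriorDisk Xᶜ)
    (hφ_map : map φ (cobounded ℂ) = cobounded ℂ) (hX : IsPreconnected Xᶜ)
    [LocallyConnectedSpace (frontier X)] :
    ∃ Φ, ContinuousOn Φ (closure exteriorDisk) ∧ EqOn Φ φ exteriorDisk := by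
  have hlim : ∀ z ∈ exteriorDisk, Tendsto φ (𝓝[exteriorDisk] z) (𝓝 (φ z)) :=
    hφ.differentiableOn.continuousOn
  refine ⟨extendFrom exteriorDisk φ, continuousOn_extendFrom Subset.rfl fun z hz ↦ ?_,
    fun z hz ↦ extendFrom_eq (subset_closure hz) (hlim z hz)⟩
  by_cases hzE : z ∈ exteriorDisk
  · exact ⟨φ z, hlim z hzE⟩
  · exact exists_tendsto_nhdsWithin_exteriorDisk hφ hφ_map hX
      (le_antisymm (not_lt.1 hzE) (closure_exteriorDisk.subset hz))

end

/-- Carathéodory–Torhorst theorem: for a compact, connected, full set `X ⊆ ℂ` with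
more than one point and a conformal isomorphism `φ : ℂ \ 𝔻̄ → ℂ \ X`, the map `φ`
extends continuously to `{|z| ≥ 1}` iff `∂X` is locally connected. -/
theorem caratheodory_torhorst (X : Set ℂ) (hXc : IsCompact X)
    (hXconn : IsConnected X) (hXfull : IsConnected Xᶜ) (hX1 : X.Nontrivial)
    (φ : ℂ → ℂ) (hφd : DifferentiableOn ℂ φ {z : ℂ | 1 < ‖z‖})
    (hφb : Set.BijOn φ {z : ℂ | 1 < ‖z‖} Xᶜ) :
    (∃ Φ : ℂ → ℂ, ContinuousOn Φ {z : ℂ | 1 ≤ ‖z‖} ∧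
        ∀ z : ℂ, 1 < ‖z‖ → Φ z = φ z) ↔
      LocallyConnectedSpace (frontier X) := by
  have hφ : IsConformalIso φ exteriorDisk Xᶜ := ⟨isOpen_exteriorDisk, hφd, hφb⟩
  have hφ_map : map φ (cobounded ℂ) = cobounded ℂ :=
    hφ.map_cobounded exteriorDisk_mem_cobounded hXconn.isPreconnected hX1
  rw [← closure_exteriorDisk]
  constructor
  · rintro ⟨Φ, hΦ, hΦφ⟩
    exact locallyConnectedSpace_frontier_of_continuousOn hφ hφ_map hΦ hΦφ
  · intro
    exact exists_continuousOn_extension hφ hφ_map hXfull.isPreconnected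
end
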